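/- arXiv:1501.06822 — 2 statements merged into one kernel-verified Lean document; each statement's English description precedes it below -/
import Mathlib

section
/- In the heat kernel setup, fix an integer b ≥ 2 and α ∈ (−2,1). Define, for f, g ∈ L^∞(μ), the paraproduct Π_g^{(b)}(f) := γ_b^{−1} ∫_0^1 [ (tL)P_t^{(b)}( Q_t^{(b−1)} f · P_t^{(b)} g ) + Q_t^{(b−1)}( (tL)P_t^{(b)} f · P_t^{(b)} g ) ] dt/t, where for s ∈ (0,1] the functions Q_s^{(b−1)} Π_g^{(b)}(f) and e^{−L} Π_g^{(b)}(f) are defined by applying the operators under the time integral (each resulting dt/t-integral converging absolutely in L^∞). Then there is a constant C such that for every f ∈ L^∞ with ‖f‖_{C^α,(b−1)} < ∞ and every g ∈ L^∞: ‖e^{−L} Π_g^{(b)}(f)‖_∞ + sup_{0<s≤1} s^{−α/2} ‖Q_s^{(b−1)} Π_g^{(b)}(f)‖_∞ ≤ C·‖g‖_∞·‖f‖_{C^α,(b−1)}, i.e. ‖Π_g^{(b)}(f)‖_{C^α} ≲ ‖g‖_∞‖f‖_{C^α}. (Proposition 3.2, first estimate.) -/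
open MeasureTheory Metric Set
open scoped ENNReal NNReal

noncomputable section

/-- The (pointwise) supremum norm of a real-valued function, valued in `ℝ≥0∞`. -/
def supNorm {M : Type*} (g : M → ℝ) : ℝ≥0∞ := ⨆ x, (‖g x‖₊ : ℝ≥0∞)

/-- `γ_a = ∫_0^∞ s^a e^{-s} ds/s`. -/
def gammaInt (a : ℕ) : ℝ := ∫ s in Set.Ioi (0 : ℝ), s ^ a * Real.exp (-s) / s

/-- A conservative heat kernel on a doubling metric measure space, satisfying the
Gaussian upper estimates (UE) for all time derivatives, for `0 < t ≤ 1`. -/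
structure HeatKernelSetup (M : Type*) [MeasurableSpace M] [MetricSpace M] where
  μ : Measure M
  p : ℝ → M → M → ℝ
  C_D : ℝ
  C_D_pos : 0 < C_D
  doubling : ∀ (x : M) (r : ℝ), 0 < r →
    μ (Metric.ball x (2 * r)) ≤ ENNReal.ofReal C_D * μ (Metric.ball x r)
  p_nonneg : ∀ t : ℝ, 0 < t → ∀ x y, 0 ≤ p t x y
  p_symm : ∀ t : ℝ, 0 < t → ∀ x y, p t x y = p t y x
  p_meas : ∀ t : ℝ, 0 < t → Measurable (Function.uncurry (p t))
  semigroup : ∀ s t : ℝ, 0 < s → 0 < t → ∀ x z,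
    p (s + t) x z = ∫ y, p s x y * p t y z ∂μ
  conservative : ∀ t : ℝ, 0 < t → ∀ x, ∫ y, p t x y ∂μ = 1
  smooth : ∀ (x y : M) (m : ℕ) (t : ℝ), 0 < t →
    DifferentiableAt ℝ (iteratedDeriv m (fun s => p s x y)) t
  diff_under_int : ∀ (f : M → ℝ), Measurable f → supNorm f < ⊤ →
    ∀ (m : ℕ) (x : M) (t : ℝ), 0 < t →
      iteratedDeriv m (fun s => ∫ y, p s x y * f y ∂μ) t
        = ∫ y, iteratedDeriv m (fun s => p s x y) t * f y ∂μ
  UE : ∀ m : ℕ, ∃ C, 0 < C ∧ ∃ c, 0 < c ∧ ∀ t : ℝ, 0 < t → t ≤ 1 → ∀ x y,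
    |t ^ m * iteratedDeriv m (fun s => p s x y) t|
      ≤ C / Real.sqrt ((μ (Metric.ball x (Real.sqrt t))).toReal
            * (μ (Metric.ball y (Real.sqrt t))).toReal)
          * Real.exp (-c * dist x y ^ 2 / t)

namespace HeatKernelSetup

variable {M : Type*} [MeasurableSpace M] [MetricSpace M] (H : HeatKernelSetup M)

/-- The semigroup `e^{-tL}` applied to `f`. -/
def S (t : ℝ) (f : M → ℝ) (x : M) : ℝ := ∫ y, H.p t x y * f y ∂H.μ

/-- `Q_t^{(a)} f = (-1)^a t^a ∂_t^a (e^{-tL} f)`. -/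
def Q (a : ℕ) (t : ℝ) (f : M → ℝ) (x : M) : ℝ :=
  (-1 : ℝ) ^ a * t ^ a * iteratedDeriv a (fun s => H.S s f x) t

/-- `P_t^{(a)} f = ∑_{k<a} c_{a,k} (-1)^k t^k ∂_t^k (e^{-tL} f)`, where the coefficients
`c_{a,k} = 1/k!` are determined by `φ_a(x) = (∑_k c_{a,k} x^k) e^{-x}`. -/
def P (a : ℕ) (t : ℝ) (f : M → ℝ) (x : M) : ℝ :=
  ∑ k ∈ Finset.range a, ((Nat.factorial k : ℝ))⁻¹ * (-1 : ℝ) ^ k * t ^ k *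
    iteratedDeriv k (fun s => H.S s f x) t

/-- `(tL)P_t^{(a)} f = ∑_{k<a} c_{a,k} (-1)^{k+1} t^{k+1} ∂_t^{k+1} (e^{-tL} f)`. -/
def LP (a : ℕ) (t : ℝ) (f : M → ℝ) (x : M) : ℝ :=
  ∑ k ∈ Finset.range a, ((Nat.factorial k : ℝ))⁻¹ * (-1 : ℝ) ^ (k + 1) * t ^ (k + 1) *
    iteratedDeriv (k + 1) (fun s => H.S s f x) t

/-- The Hölder norm `‖f‖_{C^σ,(a)} = ‖e^{-L} f‖_∞ + sup_{0<t≤1} t^{-σ/2} ‖Q_t^{(a)} f‖_∞`. -/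
def CNorm (a : ℕ) (σ : ℝ) (f : M → ℝ) : ℝ≥0∞ :=
  supNorm (H.S 1 f) +
    ⨆ t ∈ Set.Ioc (0 : ℝ) 1, ENNReal.ofReal (t ^ (-σ / 2)) * supNorm (H.Q a t f)

/-- The integrand of the paraproduct `Π_g^{(b)}(f)` at frequency scale `t`:
`(tL)P_t^{(b)}( Q_t^{(b-1)} f · P_t^{(b)} g ) + Q_t^{(b-1)}( (tL)P_t^{(b)} f · P_t^{(b)} g )`. -/
def paraInner (b : ℕ) (g f : M → ℝ) (t : ℝ) : M → ℝ := fun y =>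
  H.LP b t (fun z => H.Q (b - 1) t f z * H.P b t g z) y
    + H.Q (b - 1) t (fun z => H.LP b t f z * H.P b t g z) y

/-- `Q_s^{(a)} Π_g^{(b)}(f)`, defined by applying `Q_s^{(a)}` under the time integral. -/
def paraQ (b a : ℕ) (g f : M → ℝ) (s : ℝ) : M → ℝ := fun x =>
  (gammaInt b)⁻¹ * ∫ t in Set.Ioc (0 : ℝ) 1, H.Q a s (H.paraInner b g f t) x / t

/-- `e^{-L} Π_g^{(b)}(f)`, defined by applying `e^{-L}` under the time integral. -/
def paraS (b : ℕ) (g f : M → ℝ) : M → ℝ := fun x =>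
  (gammaInt b)⁻¹ * ∫ t in Set.Ioc (0 : ℝ) 1, H.S 1 (H.paraInner b g f t) x / t

/-- The paraproduct `Π_g^{(b)}(f)` as a function, when the integral converges. -/
def paraFn (b : ℕ) (g f : M → ℝ) : M → ℝ := fun x =>
  (gammaInt b)⁻¹ * ∫ t in Set.Ioc (0 : ℝ) 1, H.paraInner b g f t x / t

/-- The resolution operator `R(v)_t = ∫_0^t P_{t-s}^{(b)} v(s) ds`. -/
def resolve (b : ℕ) (v : ℝ → M → ℝ) (t : ℝ) : M → ℝ := fun x =>
  ∫ s in Set.Ioc (0 : ℝ) t, H.P b (t - s) (v s) x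

end HeatKernelSetup

/-!
By the semigroup law, `Q_s^{(m)} Q_t^{(n)} = s^m t^n / (s + t)^{m+n} Q_{s+t}^{(m+n)}`, so for
`m, n ≥ 1` the operators at scales `s` and `t` are almost orthogonal, with norm
`≲ s t / (s + t)^2`. Since `b ≥ 2`, both `Q_t^{(b-1)}` and `(tL)P_t^{(b)}` are combinations of
`Q_t^{(n)}` with `n ≥ 1`, and this decay is available for both terms of the paraproduct.

The inner factors are `≲ t^{α/2}`: this is the Hölder norm itself for `Q_t^{(b-1)} f`, while
`(tL)P_t^{(b)} f` also involves derivatives of order `1 ≤ j < b - 1`. These are recovered by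
integrating the next derivative in time from `t` to `2`, where `e^{-L} f` controls the boundary
term; the integral converges to the right power because `j > α/2`.

With `β = α/2 ∈ (-1, 1)` the proof ends with the scaling identity
`∫_0^∞ s t / (s + t)^2 t^β dt/t = K s^β`. The estimate of `e^{-L} Π_g f` is the case `m = 0`,
`s = 1`, where the decay for `t ≪ s` suffices because `t ≤ 1 = s`.
-/

section Elementary

lemma mul_le_sq_div_add_mul_sq {c : ℝ} (hc : 0 < c) (a n : ℝ) :
    n * a ≤ a ^ 2 / (4 * c) + c * n ^ 2 := by
  have h : a ^ 2 / (4 * c) + c * n ^ 2 - n * a = (a - 2 * c * n) ^ 2 / (4 * c) := by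
    field_simp
    ring
  have : 0 ≤ (a - 2 * c * n) ^ 2 / (4 * c) := by positivity
  linarith

lemma summable_exp_neg_mul_sq_mul_pow {c D : ℝ} (hc : 0 < c) (hD : 0 < D) :
    Summable fun n : ℕ => Real.exp (-c * n ^ 2) * D ^ n := by
  have h_geom : Summable fun n : ℕ =>
      Real.exp ((Real.log D + 1) ^ 2 / (4 * c)) * Real.exp (-n) :=
    Real.summable_exp_neg_nat.mul_left _
  refine h_geom.of_nonneg_of_le (fun n => by positivity) fun n => ?_
  rw [← Real.exp_log hD, ← Real.exp_nat_mul, ← Real.exp_add, ← Real.exp_add, Real.exp_log hD,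
    Real.exp_le_exp]
  linarith [mul_le_sq_div_add_mul_sq hc (Real.log D + 1) n]

lemma pow_mul_pow_div_add_pow_le {m n : ℕ} (hn : 1 ≤ n) {s t : ℝ} (hs : 0 < s) (ht : 0 < t)
    (hm : 1 ≤ m ∨ t ≤ s) :
    s ^ m * t ^ n / (s + t) ^ (m + n) ≤ 2 * (s * t / (s + t) ^ 2) := by
  have hst : 0 < s + t := by positivity
  set x := s / (s + t) with hx
  set y := t / (s + t) with hy
  have hx0 : 0 ≤ x := by positivity
  have hy0 : 0 ≤ y := by positivity
  have hxy : x + y = 1 := by rw [hx, hy, ← add_div, div_self hst.ne']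
  have hyn : y ^ n ≤ y := pow_le_of_le_one hy0 (by linarith) (by lia)
  have hxm : x ^ m ≤ 2 * x := by
    rcases hm with hm | hts
    · linarith [pow_le_of_le_one hx0 (by linarith) (by lia : m ≠ 0)]
    · have : y ≤ x := div_le_div_of_nonneg_right hts hst.le
      linarith [pow_le_one₀ (n := m) hx0 (by linarith)]
  calc s ^ m * t ^ n / (s + t) ^ (m + n) = x ^ m * y ^ n := by
        rw [hx, hy, div_pow, div_pow, pow_add, div_mul_div_comm]
    _ ≤ 2 * x * y := by gcongr
    _ = 2 * (s * t / (s + t) ^ 2) := by rw [hx, hy, mul_assoc, div_mul_div_comm, sq]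

end Elementary

section Calculus

open scoped Topology

lemma norm_le_norm_add_rpow_of_norm_deriv_le {E : Type*} [NormedAddCommGroup E] [NormedSpace ℝ E]
    {u u' : ℝ → E} {t T K e : ℝ} (ht : 0 < t) (htT : t ≤ T) (he : e < 0)
    (hu : ∀ r ∈ Icc t T, HasDerivAt u (u' r) r)
    (hu' : ∀ r ∈ Icc t T, ‖u' r‖ ≤ K * r ^ (e - 1)) :
    ‖u t‖ ≤ ‖u T‖ + K / (-e) * t ^ e := by
  let B : ℝ → ℝ := fun r => ‖u T‖ + K / (-e) * (T - r) ^ e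
  have hK : 0 ≤ K := nonneg_of_mul_nonneg_left
    ((norm_nonneg _).trans (hu' t ⟨le_rfl, htT⟩)) (Real.rpow_pos_of_pos ht _)
  have hB_zero : ‖u T‖ ≤ B 0 := by
    have := div_nonneg hK (neg_nonneg.2 he.le)
    have := Real.rpow_nonneg (ht.le.trans htT) e
    simp only [B, sub_zero]
    nlinarith
  have h_mem {r : ℝ} (hr : r ∈ Icc 0 (T - t)) : T - r ∈ Icc t T :=
    ⟨by linarith [hr.2], by linarith [hr.1]⟩
  have h_deriv (r : ℝ) (hr : r ∈ Icc 0 (T - t)) :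
      HasDerivAt (fun r => u (T - r)) (-u' (T - r)) r := by
    simpa [Function.comp_def] using (hu _ (h_mem hr)).scomp r ((hasDerivAt_id r).const_sub T)
  have hB (r : ℝ) (hr : r ∈ Icc 0 (T - t)) : HasDerivAt B (K * (T - r) ^ (e - 1)) r := by
    have h_pos : 0 < T - r := ht.trans_le (h_mem hr).1
    have h := (((hasDerivAt_id r).const_sub T).rpow_const (p := e) (.inl h_pos.ne')).const_mul
      (K / (-e))
    refine (h.const_add ‖u T‖).congr_deriv ?_
    field_simp [he.ne]
    simp
  have h_end := image_norm_le_of_norm_deriv_right_le_deriv_boundary' (a := 0) (b := T - t)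
    (fun r hr => (h_deriv r hr).continuousAt.continuousWithinAt)
    (fun r hr => (h_deriv r (Ico_subset_Icc_self hr)).hasDerivWithinAt)
    (B := B)
    (by simpa using hB_zero)
    (fun r hr => (hB r hr).continuousAt.continuousWithinAt)
    (fun r hr => (hB r (Ico_subset_Icc_self hr)).hasDerivWithinAt)
    (fun r hr => by simpa using hu' _ (h_mem (Ico_subset_Icc_self hr)))
    (right_mem_Icc.2 (by linarith))
  simpa [B] using h_end

lemma integrableOn_rpow_div_one_add_sq {β : ℝ} (hβ : β ∈ Ioo (-1 : ℝ) 1) :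
    IntegrableOn (fun u : ℝ => u ^ β / (1 + u) ^ 2) (Ioi 0) := by
  have h_meas : Measurable fun u : ℝ => u ^ β / (1 + u) ^ 2 := by fun_prop
  rw [← Ioc_union_Ioi_eq_Ioi zero_le_one]
  refine IntegrableOn.union ?_ ?_
  · have h_dom : IntegrableOn (fun u : ℝ => u ^ β) (Ioc 0 1) :=
      (intervalIntegrable_iff_integrableOn_Ioc_of_le zero_le_one).1
        (intervalIntegral.intervalIntegrable_rpow' hβ.1)
    refine h_dom.mono' h_meas.aestronglyMeasurable ?_
    filter_upwards [self_mem_ae_restrict measurableSet_Ioc] with u hu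
    have hu0 := hu.1
    rw [Real.norm_of_nonneg (by positivity)]
    exact div_le_self (by positivity) (by nlinarith)
  · have h_dom : IntegrableOn (fun u : ℝ => u ^ (β - 2)) (Ioi 1) :=
      integrableOn_Ioi_rpow_of_lt (by linarith [hβ.2]) one_pos
    refine h_dom.mono' h_meas.aestronglyMeasurable ?_
    filter_upwards [self_mem_ae_restrict measurableSet_Ioi] with u hu
    have hu0 : 0 < u := one_pos.trans hu
    rw [Real.norm_of_nonneg (by positivity), Real.rpow_sub hu0, Real.rpow_two]
    gcongr
    linarith

lemma mul_rpow_div_add_sq_eq {β s t : ℝ} (hs : 0 < s) (ht : 0 < t) :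
    s * t ^ β / (s + t) ^ 2 = s ^ (β - 1) * ((s⁻¹ * t) ^ β / (1 + s⁻¹ * t) ^ 2) := by
  have h : 1 + s⁻¹ * t = (s + t) / s := by field_simp
  rw [h, Real.mul_rpow (by positivity) ht.le, Real.inv_rpow hs.le, Real.rpow_sub_one hs.ne']
  have := Real.rpow_pos_of_pos hs β
  field_simp

lemma integrableOn_mul_rpow_div_add_sq {β : ℝ} (hβ : β ∈ Ioo (-1 : ℝ) 1) {s : ℝ} (hs : 0 < s) :
    IntegrableOn (fun t => s * t ^ β / (s + t) ^ 2) (Ioi 0) := by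
  have h_scaled : IntegrableOn (fun t => (s⁻¹ * t) ^ β / (1 + s⁻¹ * t) ^ 2) (Ioi 0) := by
    rw [integrableOn_Ioi_comp_mul_left_iff (fun u : ℝ => u ^ β / (1 + u) ^ 2) 0 (inv_pos.2 hs),
      mul_zero]
    exact integrableOn_rpow_div_one_add_sq hβ
  exact IntegrableOn.congr_fun (h_scaled.const_mul (s ^ (β - 1)))
    (fun t ht => (mul_rpow_div_add_sq_eq hs ht).symm) measurableSet_Ioi

lemma integral_mul_rpow_div_add_sq (β : ℝ) {s : ℝ} (hs : 0 < s) :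
    ∫ t in Ioi 0, s * t ^ β / (s + t) ^ 2
      = s ^ β * ∫ u in Ioi (0 : ℝ), u ^ β / (1 + u) ^ 2 := by
  rw [setIntegral_congr_fun measurableSet_Ioi fun t ht => mul_rpow_div_add_sq_eq hs ht,
    integral_const_mul,
    integral_comp_mul_left_Ioi (fun u : ℝ => u ^ β / (1 + u) ^ 2) 0 (inv_pos.2 hs),
    mul_zero, inv_inv, smul_eq_mul, ← mul_assoc, Real.rpow_sub_one hs.ne',
    div_mul_cancel₀ _ hs.ne']

lemma hasDerivAt_integral_mul_of_bounded {X : Type*} [MeasurableSpace X] {μ : Measure X}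
    {k : X → ℝ} {w w' : ℝ → X → ℝ} {t B B' : ℝ} {s : Set ℝ} (hk : Integrable k μ)
    (hs : s ∈ 𝓝 t) (hw : ∀ r ∈ s, Measurable (w r)) (hw' : Measurable (w' t))
    (hB : ∀ x, |w t x| ≤ B) (hB' : ∀ r ∈ s, ∀ x, |w' r x| ≤ B')
    (h_deriv : ∀ r ∈ s, ∀ x, HasDerivAt (fun r => w r x) (w' r x) r) :
    HasDerivAt (fun r => ∫ x, k x * w r x ∂μ) (∫ x, k x * w' t x ∂μ) t :=
  (hasDerivAt_integral_of_dominated_loc_of_deriv_le (bound := fun x => |k x| * B') hs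
    (Filter.eventually_of_mem hs fun r hr =>
      hk.aestronglyMeasurable.mul (hw r hr).aestronglyMeasurable)
    (hk.mul_bdd (c := B) (hw t (mem_of_mem_nhds hs)).aestronglyMeasurable (.of_forall hB))
    (hk.aestronglyMeasurable.mul hw'.aestronglyMeasurable)
    (.of_forall fun x r hr => by
      rw [norm_mul]
      exact mul_le_mul_of_nonneg_left (hB' r hr x) (norm_nonneg _))
    (hk.abs.mul_const B')
    (.of_forall fun x r hr => (h_deriv r hr x).const_mul (k x))).2

end Calculus

lemma supNorm_le_ofReal {M : Type*} {h : M → ℝ} {B : ℝ} (hB : ∀ x, |h x| ≤ B) :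
    supNorm h ≤ ENNReal.ofReal B := by
  refine iSup_le fun x => ?_
  rw [← enorm_eq_nnnorm, Real.enorm_eq_ofReal_abs]
  exact ENNReal.ofReal_le_ofReal (hB x)

lemma abs_le_toReal_supNorm {M : Type*} {h : M → ℝ} (hh : supNorm h < ⊤) (x : M) :
    |h x| ≤ (supNorm h).toReal := by
  rw [← Real.norm_eq_abs, ← toReal_enorm]
  exact ENNReal.toReal_mono hh.ne (le_iSup (fun x => (‖h x‖₊ : ℝ≥0∞)) x)

section BoundedMeasurable

variable {M : Type*} [MeasurableSpace M] {h k : M → ℝ} {A B : ℝ}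

/-- `BoundedMeasurable h B` says that `h` is a measurable function with `‖h‖_∞ ≤ B`: membership in
`L^∞` together with an explicit bound, the form in which it enters every estimate below. -/
structure BoundedMeasurable (h : M → ℝ) (B : ℝ) : Prop where
  measurable : Measurable h
  abs_le : ∀ x, |h x| ≤ B

namespace BoundedMeasurable

lemma nonneg (hh : BoundedMeasurable h B) (x : M) : 0 ≤ B := (abs_nonneg _).trans (hh.abs_le x)

lemma supNorm_lt_top (hh : BoundedMeasurable h B) : supNorm h < ⊤ :=
  (supNorm_le_ofReal hh.abs_le).trans_lt ENNReal.ofReal_lt_top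

lemma add (hh : BoundedMeasurable h A) (hk : BoundedMeasurable k B) :
    BoundedMeasurable (fun x => h x + k x) (A + B) :=
  ⟨hh.measurable.add hk.measurable,
    fun x => (abs_add_le _ _).trans (add_le_add (hh.abs_le x) (hk.abs_le x))⟩

lemma mul (hh : BoundedMeasurable h A) (hk : BoundedMeasurable k B) :
    BoundedMeasurable (fun x => h x * k x) (A * B) :=
  ⟨hh.measurable.mul hk.measurable, fun x => by
    rw [abs_mul]
    exact mul_le_mul (hh.abs_le x) (hk.abs_le x) (abs_nonneg _) (hh.nonneg x)⟩

lemma const_mul (hh : BoundedMeasurable h B) (c : ℝ) :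
    BoundedMeasurable (fun x => c * h x) (|c| * B) :=
  ⟨hh.measurable.const_mul c, fun x => by
    rw [abs_mul]
    exact mul_le_mul_of_nonneg_left (hh.abs_le x) (abs_nonneg c)⟩

lemma sum {ι : Type*} {F : Finset ι} {h : ι → M → ℝ} {B : ι → ℝ}
    (hh : ∀ i ∈ F, BoundedMeasurable (h i) (B i)) :
    BoundedMeasurable (fun x => ∑ i ∈ F, h i x) (∑ i ∈ F, B i) :=
  ⟨Finset.measurable_fun_sum F fun i hi => (hh i hi).measurable,
    fun x => (Finset.abs_sum_le_sum_abs _ _).trans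
      (Finset.sum_le_sum fun i hi => (hh i hi).abs_le x)⟩

lemma integrable_mul {μ : Measure M} (hh : BoundedMeasurable h B) (hk : Integrable k μ) :
    Integrable (fun x => k x * h x) μ :=
  hk.mul_bdd hh.measurable.aestronglyMeasurable (.of_forall hh.abs_le)

lemma abs_integral_mul_le {μ : Measure M} (hh : BoundedMeasurable h B) (hk : Integrable k μ) :
    |∫ x, k x * h x ∂μ| ≤ (∫ x, |k x| ∂μ) * B := by
  rw [← integral_mul_const]
  refine norm_integral_le_of_norm_le (f := fun x => k x * h x) (hk.abs.mul_const B)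
    (.of_forall fun x => ?_)
  rw [norm_mul]
  exact mul_le_mul_of_nonneg_left (hh.abs_le x) (norm_nonneg _)

end BoundedMeasurable

end BoundedMeasurable

section IsTimeFamily

variable {M : Type*} [MeasurableSpace M] {v w : ℝ → M → ℝ} {f : M → ℝ} {B : ℝ}

/-- A family `w t` of bounded functions on `M` for `0 < t ≤ 1` that is jointly measurable in time
and space, so that expressions built from it can be integrated in `t`. -/
structure IsTimeFamily (w : ℝ → M → ℝ) : Prop where
  measurable : Measurable fun q : Ioc (0 : ℝ) 1 × M => w q.1 q.2
  exists_abs_le : ∀ t ∈ Ioc (0 : ℝ) 1, ∃ B, ∀ x, |w t x| ≤ B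

namespace IsTimeFamily

lemma exists_boundedMeasurable (hw : IsTimeFamily w) {t : ℝ} (ht : t ∈ Ioc (0 : ℝ) 1) :
    ∃ B, BoundedMeasurable (w t) B :=
  let ⟨B, hB⟩ := hw.exists_abs_le t ht
  ⟨B, hw.measurable.comp (measurable_prodMk_left (x := (⟨t, ht⟩ : Ioc (0 : ℝ) 1))), hB⟩

lemma const (hf : BoundedMeasurable f B) : IsTimeFamily fun _ => f :=
  ⟨hf.measurable.comp measurable_snd, fun _ _ => ⟨B, hf.abs_le⟩⟩

lemma add (hv : IsTimeFamily v) (hw : IsTimeFamily w) : IsTimeFamily fun t x => v t x + w t x :=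
  ⟨hv.measurable.add hw.measurable, fun _ ht =>
    let ⟨_, hB⟩ := hv.exists_boundedMeasurable ht
    let ⟨_, hB'⟩ := hw.exists_boundedMeasurable ht
    ⟨_, (hB.add hB').abs_le⟩⟩

lemma mul (hv : IsTimeFamily v) (hw : IsTimeFamily w) : IsTimeFamily fun t x => v t x * w t x :=
  ⟨hv.measurable.mul hw.measurable, fun _ ht =>
    let ⟨_, hB⟩ := hv.exists_boundedMeasurable ht
    let ⟨_, hB'⟩ := hw.exists_boundedMeasurable ht
    ⟨_, (hB.mul hB').abs_le⟩⟩

lemma const_mul (hw : IsTimeFamily w) (c : ℝ) : IsTimeFamily fun t x => c * w t x :=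
  ⟨hw.measurable.const_mul c, fun _ ht =>
    let ⟨_, hB⟩ := hw.exists_boundedMeasurable ht
    ⟨_, (hB.const_mul c).abs_le⟩⟩

lemma sum {ι : Type*} {F : Finset ι} {w : ι → ℝ → M → ℝ} (hw : ∀ i ∈ F, IsTimeFamily (w i)) :
    IsTimeFamily fun t x => ∑ i ∈ F, w i t x := by
  refine ⟨Finset.measurable_fun_sum F fun i hi => (hw i hi).measurable, fun t ht => ?_⟩
  choose! B hB using fun i hi => (hw i hi).exists_boundedMeasurable ht
  exact ⟨_, (BoundedMeasurable.sum hB).abs_le⟩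

end IsTimeFamily

end IsTimeFamily

namespace HeatKernelSetup

section Volume

variable {M : Type*} [MeasurableSpace M] [MetricSpace M] (H : HeatKernelSetup M)

lemma measure_ball_two_pow_mul_le (x : M) {r : ℝ} (hr : 0 < r) (k : ℕ) :
    H.μ (ball x (2 ^ k * r)) ≤ ENNReal.ofReal H.C_D ^ k * H.μ (ball x r) := by
  induction k with
  | zero => simp
  | succ k ih =>
    rw [pow_succ' 2 k, mul_assoc, pow_succ', mul_assoc]
    exact (H.doubling x (2 ^ k * r) (by positivity)).trans (by gcongr)

-- If the volume were `0` or `∞`, its `toReal` would vanish and (UE) would force `p 1 x = 0`.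
lemma toReal_measure_ball_one_ne_zero (x : M) : (H.μ (ball x 1)).toReal ≠ 0 := by
  intro h_zero
  obtain ⟨C, -, c, -, h_UE⟩ := H.UE 0
  have h_p (y : M) : H.p 1 x y = 0 := by
    simpa [h_zero] using h_UE 1 one_pos le_rfl x y
  simpa [h_p] using H.conservative 1 one_pos x

lemma measure_ball_ne_top (x : M) (r : ℝ) : H.μ (ball x r) ≠ ⊤ := by
  obtain ⟨k, hk⟩ := pow_unbounded_of_one_lt r one_lt_two
  have h_one := (ENNReal.toReal_ne_zero.1 (H.toReal_measure_ball_one_ne_zero x)).2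
  refine ne_top_of_le_ne_top (ENNReal.mul_ne_top (by finiteness) h_one)
    ((measure_mono (ball_subset_ball ?_)).trans (H.measure_ball_two_pow_mul_le x one_pos k))
  linarith

lemma measure_ball_ne_zero (x : M) {r : ℝ} (hr : 0 < r) : H.μ (ball x r) ≠ 0 := by
  obtain ⟨k, hk⟩ := pow_unbounded_of_one_lt r⁻¹ one_lt_two
  intro h_zero
  have h_le := (measure_mono (ball_subset_ball ((inv_lt_iff_one_lt_mul₀ hr).1 hk).le)).trans
    (H.measure_ball_two_pow_mul_le x hr k)
  rw [h_zero, mul_zero, nonpos_iff_eq_zero] at h_le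
  exact (ENNReal.toReal_ne_zero.1 (H.toReal_measure_ball_one_ne_zero x)).1 h_le

lemma one_le_C_D (x : M) : 1 ≤ H.C_D := by
  have h_mono : H.μ (ball x 1) ≤ ENNReal.ofReal H.C_D * H.μ (ball x 1) :=
    (measure_mono (ball_subset_ball (by norm_num))).trans (H.doubling x 1 one_pos)
  rw [← ENNReal.one_le_ofReal]
  by_contra! h_lt
  exact ((ENNReal.mul_lt_mul_left (H.measure_ball_ne_zero x one_pos)
    (H.measure_ball_ne_top x 1) h_lt).trans_eq (one_mul _)).not_ge h_mono

-- `M` need not be a Borel space, so the exhausting balls are replaced by measurable hulls.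
lemma sigmaFinite : SigmaFinite H.μ := by
  rcases isEmpty_or_nonempty M with _ | ⟨⟨x⟩⟩
  · rw [Measure.eq_zero_of_isEmpty H.μ]
    infer_instance
  · refine ⟨⟨⟨fun n => toMeasurable H.μ (ball x n), fun _ => trivial, fun n => ?_, ?_⟩⟩⟩
    · rw [measure_toMeasurable]
      exact (H.measure_ball_ne_top x n).lt_top
    · rw [← univ_subset_iff, ← iUnion_ball_nat x]
      exact iUnion_mono fun n => subset_toMeasurable _ _

/-- The volume `V(x, r) = μ(B(x, r))` as a real number; balls have finite measure by
`measure_ball_ne_top`. -/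
def ballVol (x : M) (r : ℝ) : ℝ := H.μ.real (ball x r)

lemma ballVol_pos (x : M) {r : ℝ} (hr : 0 < r) : 0 < H.ballVol x r :=
  ENNReal.toReal_pos (H.measure_ball_ne_zero x hr) (H.measure_ball_ne_top x r)

lemma ofReal_ballVol (x : M) (r : ℝ) : ENNReal.ofReal (H.ballVol x r) = H.μ (ball x r) :=
  ENNReal.ofReal_toReal (H.measure_ball_ne_top x r)

lemma ballVol_mono (x : M) : Monotone (H.ballVol x) := fun _ r' hr =>
  measureReal_mono (ball_subset_ball hr) (H.measure_ball_ne_top x r')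

lemma ballVol_two_pow_mul_le (x : M) {r : ℝ} (hr : 0 < r) (k : ℕ) :
    H.ballVol x (2 ^ k * r) ≤ H.C_D ^ k * H.ballVol x r := by
  have h := ENNReal.toReal_mono (ENNReal.mul_ne_top (by finiteness) (H.measure_ball_ne_top x r))
    (H.measure_ball_two_pow_mul_le x hr k)
  rwa [ENNReal.toReal_mul, ENNReal.toReal_pow, ENNReal.toReal_ofReal H.C_D_pos.le] at h

lemma exists_ballVol_le_mul_exp {c : ℝ} (hc : 0 < c) : ∃ K ≥ 0, ∀ (x y : M) {r : ℝ}, 0 < r →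
    H.ballVol x r ≤ K * Real.exp (c * (dist x y / r) ^ 2) * H.ballVol y r := by
  have hD := H.C_D_pos
  refine ⟨H.C_D * Real.exp (Real.log H.C_D ^ 2 / (4 * c)), by positivity, fun x y r hr => ?_⟩
  set ρ := dist x y / r
  have hρ0 : 0 ≤ ρ := by positivity
  set k := ⌈ρ⌉₊
  have h_ball : ball x r ⊆ ball y (2 ^ k * r) := by
    have h_pow : (k : ℝ) + 1 ≤ 2 ^ k := mod_cast Nat.lt_two_pow_self (n := k)
    have h_dist : dist x y = ρ * r := (div_mul_cancel₀ _ hr.ne').symm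
    refine ball_subset_ball' ?_
    rw [h_dist]
    nlinarith [Nat.le_ceil ρ]
  have h_pow : H.C_D ^ k ≤
      H.C_D * Real.exp (Real.log H.C_D ^ 2 / (4 * c)) * Real.exp (c * ρ ^ 2) := calc
    H.C_D ^ k = H.C_D ^ (k : ℝ) := (Real.rpow_natCast _ _).symm
    _ ≤ H.C_D ^ (ρ + 1) :=
      Real.rpow_le_rpow_of_exponent_le (H.one_le_C_D x) (Nat.ceil_lt_add_one hρ0).le
    _ = H.C_D * Real.exp (ρ * Real.log H.C_D) := by
      rw [Real.rpow_add_one hD.ne', mul_comm, Real.rpow_def_of_pos hD, mul_comm ρ]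
    _ ≤ H.C_D * Real.exp (Real.log H.C_D ^ 2 / (4 * c) + c * ρ ^ 2) := by
      gcongr
      exact mul_le_sq_div_add_mul_sq hc _ _
    _ = _ := by rw [Real.exp_add, mul_assoc]
  calc H.ballVol x r ≤ H.ballVol y (2 ^ k * r) :=
        measureReal_mono h_ball (H.measure_ball_ne_top y _)
    _ ≤ H.C_D ^ k * H.ballVol y r := H.ballVol_two_pow_mul_le y hr k
    _ ≤ _ := mul_le_mul_of_nonneg_right h_pow (H.ballVol_pos y hr).le

lemma exists_inv_sqrt_ballVol_mul_ballVol_le {c : ℝ} (hc : 0 < c) :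
    ∃ K ≥ 0, ∀ (x y : M) {r : ℝ}, 0 < r →
      (√(H.ballVol x r * H.ballVol y r))⁻¹
        ≤ K * Real.exp (c * (dist x y / r) ^ 2) / H.ballVol x r := by
  obtain ⟨K, hK, h_vol⟩ := H.exists_ballVol_le_mul_exp (c := 2 * c) (by positivity)
  refine ⟨√K, by positivity, fun x y r hr => ?_⟩
  have hx := H.ballVol_pos x hr
  have hy := H.ballVol_pos y hr
  have h_exp : Real.exp (2 * c * (dist x y / r) ^ 2) = Real.exp (c * (dist x y / r) ^ 2) ^ 2 := by
    rw [← Real.exp_nat_mul]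
    push_cast
    ring_nf
  have h_sq : H.ballVol x r ^ 2
      ≤ H.ballVol x r * H.ballVol y r * (K * Real.exp (c * (dist x y / r) ^ 2) ^ 2) := by
    rw [← h_exp]
    nlinarith [h_vol x y hr]
  rw [le_div_iff₀ hx, inv_mul_le_iff₀ (by positivity)]
  calc H.ballVol x r
      ≤ √(H.ballVol x r * H.ballVol y r * (K * Real.exp (c * (dist x y / r) ^ 2) ^ 2)) :=
        (Real.le_sqrt' hx).2 h_sq
    _ = _ := by
        rw [Real.sqrt_mul (by positivity), Real.sqrt_mul hK, Real.sqrt_sq (by positivity)]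

/-- A measurable majorant of the Gaussian `y ↦ exp (-c (d(x, y) / r)²)`, constant on annuli around
`x`. Since `M` need not be a Borel space, the Gaussian itself may fail to be measurable, and the
balls are replaced by their measurable hulls. -/
def gaussianMajorant (c r : ℝ) (x y : M) : ℝ≥0∞ :=
  ∑' n : ℕ, (toMeasurable H.μ (ball x ((n + 1) * r))).indicator
    (fun _ => ENNReal.ofReal (Real.exp (-c * n ^ 2))) y

lemma measurable_gaussianMajorant (c r : ℝ) (x : M) : Measurable (H.gaussianMajorant c r x) :=
  Measurable.tsum fun _ => measurable_const.indicator (measurableSet_toMeasurable _ _)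

lemma ofReal_exp_le_gaussianMajorant {c r : ℝ} (hc : 0 < c) (hr : 0 < r) (x y : M) :
    ENNReal.ofReal (Real.exp (-c * (dist x y / r) ^ 2)) ≤ H.gaussianMajorant c r x y := by
  set ρ := dist x y / r
  have h_floor : (⌊ρ⌋₊ : ℝ) ≤ ρ := Nat.floor_le (by positivity)
  have h_mem : y ∈ toMeasurable H.μ (ball x ((⌊ρ⌋₊ + 1) * r)) := by
    refine subset_toMeasurable _ _ ?_
    rw [mem_ball, dist_comm, ← div_lt_iff₀ hr]
    exact Nat.lt_floor_add_one ρ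
  refine le_trans ?_ (ENNReal.le_tsum ⌊ρ⌋₊)
  rw [indicator_of_mem h_mem]
  refine ENNReal.ofReal_le_ofReal (Real.exp_le_exp.2 ?_)
  rw [neg_mul, neg_mul]
  gcongr

lemma lintegral_gaussianMajorant_le {c r : ℝ} (hc : 0 < c) (hr : 0 < r) (x : M) :
    ∫⁻ y, H.gaussianMajorant c r x y ∂H.μ
      ≤ ENNReal.ofReal (∑' n : ℕ, Real.exp (-c * n ^ 2) * H.C_D ^ n) * H.μ (ball x r) := by
  have hD := H.C_D_pos
  unfold gaussianMajorant
  rw [lintegral_tsum fun n =>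
      (measurable_const.indicator (measurableSet_toMeasurable _ _)).aemeasurable,
    ENNReal.ofReal_tsum_of_nonneg (fun n => by positivity) (summable_exp_neg_mul_sq_mul_pow hc hD),
    ← ENNReal.tsum_mul_right]
  refine ENNReal.tsum_le_tsum fun n => ?_
  have h_pow : (n : ℝ) + 1 ≤ 2 ^ n := mod_cast Nat.lt_two_pow_self (n := n)
  rw [lintegral_indicator_const (measurableSet_toMeasurable _ _), measure_toMeasurable,
    ENNReal.ofReal_mul (by positivity), ENNReal.ofReal_pow hD.le, mul_assoc]
  gcongr
  exact (measure_mono (ball_subset_ball (by gcongr))).trans (H.measure_ball_two_pow_mul_le x hr n)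

end Volume

section Kernel

variable {M : Type*} [MeasurableSpace M] [MetricSpace M] (H : HeatKernelSetup M)

lemma integrable_p {t : ℝ} (ht : 0 < t) (x : M) : Integrable (H.p t x) H.μ :=
  .of_integral_ne_zero (by simp [H.conservative t ht x])

/-- The time derivative `∂_tⁿ p_t(x, y)` of the heat kernel. -/
def kernelDeriv (n : ℕ) (t : ℝ) (x y : M) : ℝ := iteratedDeriv n (fun s => H.p s x y) t

lemma hasDerivAt_kernelDeriv (n : ℕ) {t : ℝ} (ht : 0 < t) (x y : M) :
    HasDerivAt (fun s => H.kernelDeriv n s x y) (H.kernelDeriv (n + 1) t x y) t := by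
  simp only [kernelDeriv, iteratedDeriv_succ]
  exact (H.smooth x y n t ht).hasDerivAt

lemma measurable_kernelDeriv (n : ℕ) {t : ℝ} (ht : 0 < t) :
    Measurable fun q : M × M => H.kernelDeriv n t q.1 q.2 := by
  induction n generalizing t with
  | zero => simpa [kernelDeriv, Function.uncurry_def] using H.p_meas t ht
  | succ n ih =>
    have h_step : Filter.Tendsto (fun k : ℕ => (1 : ℝ) / (k + 1)) Filter.atTop
        (nhdsWithin 0 (Ioi 0)) :=
      tendsto_nhdsWithin_iff.2
        ⟨tendsto_one_div_add_atTop_nhds_zero_nat,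
          .of_forall fun k => mem_Ioi.2 Nat.one_div_pos_of_nat⟩
    refine measurable_of_tendsto_metrizable (f := fun (k : ℕ) (q : M × M) =>
      ((1 : ℝ) / (k + 1))⁻¹ •
        (H.kernelDeriv n (t + 1 / (k + 1)) q.1 q.2 - H.kernelDeriv n t q.1 q.2)) (fun k => ?_) ?_
    · exact ((ih (by positivity)).sub (ih ht)).const_smul ((1 : ℝ) / (k + 1))⁻¹
    · exact tendsto_pi_nhds.2 fun q =>
        (H.hasDerivAt_kernelDeriv n ht q.1 q.2).tendsto_slope_zero_right.comp h_step

lemma measurable_kernelDeriv_right (n : ℕ) {t : ℝ} (ht : 0 < t) (x : M) :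
    Measurable (H.kernelDeriv n t x) :=
  (H.measurable_kernelDeriv n ht).comp measurable_prodMk_left

lemma measurable_kernelDeriv_subtype (n : ℕ) :
    Measurable fun q : Ioc (0 : ℝ) 1 × (M × M) => H.kernelDeriv n q.1 q.2.1 q.2.2 := by
  have h := measurable_uncurry_of_continuous_of_measurable
    (u := fun (t : Ioc (0 : ℝ) 1) (q : M × M) => H.kernelDeriv n t q.1 q.2)
    (fun q => continuous_iff_continuousAt.2 fun t =>
      (H.hasDerivAt_kernelDeriv n t.2.1 q.1 q.2).continuousAt.comp continuousAt_subtype_val)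
    (fun t => H.measurable_kernelDeriv n t.2.1)
  exact h

lemma exists_abs_kernelDeriv_le (n : ℕ) : ∃ C ≥ 0, ∃ c > 0, ∀ t ∈ Ioc (0 : ℝ) 1, ∀ x y,
    |H.kernelDeriv n t x y|
      ≤ C / (t ^ n * H.ballVol x √t) * Real.exp (-c * (dist x y / √t) ^ 2) := by
  obtain ⟨C, hC, c, hc, h_UE⟩ := H.UE n
  obtain ⟨K, hK, h_vol⟩ := H.exists_inv_sqrt_ballVol_mul_ballVol_le (c := c / 2) (by positivity)
  refine ⟨C * K, by positivity, c / 2, by positivity, fun t ⟨ht, ht1⟩ x y => ?_⟩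
  have hr : 0 < √t := Real.sqrt_pos.2 ht
  have hx := H.ballVol_pos x hr
  have h_le : t ^ n * |H.kernelDeriv n t x y|
      ≤ C * (√(H.ballVol x √t * H.ballVol y √t))⁻¹ * Real.exp (-c * (dist x y / √t) ^ 2) := by
    have h := h_UE t ht ht1 x y
    rw [abs_mul, abs_of_pos (pow_pos ht n)] at h
    rwa [div_pow, Real.sq_sqrt ht.le, ← mul_div_assoc]
  rw [← le_div_iff₀' (by positivity)] at h_le
  calc |H.kernelDeriv n t x y|
      ≤ C * (K * Real.exp (c / 2 * (dist x y / √t) ^ 2) / H.ballVol x √t)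
          * Real.exp (-c * (dist x y / √t) ^ 2) / t ^ n := by
        refine h_le.trans ?_
        gcongr
        exact h_vol x y hr
    _ = C * K / (t ^ n * H.ballVol x √t) * (Real.exp (c / 2 * (dist x y / √t) ^ 2)
          * Real.exp (-c * (dist x y / √t) ^ 2)) := by
        field_simp
    _ = C * K / (t ^ n * H.ballVol x √t) * Real.exp (-(c / 2) * (dist x y / √t) ^ 2) := by
        rw [← Real.exp_add]
        ring_nf

lemma exists_lintegral_enorm_kernelDeriv_le (n : ℕ) : ∃ C ≥ 0, ∀ t ∈ Ioc (0 : ℝ) 1, ∀ x,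
    ∫⁻ y, ‖H.kernelDeriv n t x y‖ₑ ∂H.μ ≤ ENNReal.ofReal (C / t ^ n) := by
  obtain ⟨C, hC, c, hc, h_bound⟩ := H.exists_abs_kernelDeriv_le n
  have hD := H.C_D_pos
  set K := ∑' n : ℕ, Real.exp (-c * n ^ 2) * H.C_D ^ n
  have hK0 : 0 ≤ K := tsum_nonneg fun n => by positivity
  refine ⟨C * K, by positivity, fun t ht x => ?_⟩
  have ht0 := ht.1
  have hr : 0 < √t := Real.sqrt_pos.2 ht0
  have hV := H.ballVol_pos x hr
  calc ∫⁻ y, ‖H.kernelDeriv n t x y‖ₑ ∂H.μ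
      ≤ ∫⁻ y, ENNReal.ofReal (C / (t ^ n * H.ballVol x √t)) * H.gaussianMajorant c √t x y ∂H.μ := by
        refine lintegral_mono fun y => ?_
        rw [Real.enorm_eq_ofReal_abs]
        refine (ENNReal.ofReal_le_ofReal (h_bound t ht x y)).trans ?_
        rw [ENNReal.ofReal_mul (by positivity)]
        gcongr
        exact H.ofReal_exp_le_gaussianMajorant hc hr x y
    _ = ENNReal.ofReal (C / (t ^ n * H.ballVol x √t)) * ∫⁻ y, H.gaussianMajorant c √t x y ∂H.μ :=
        lintegral_const_mul _ (H.measurable_gaussianMajorant c √t x)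
    _ ≤ ENNReal.ofReal (C / (t ^ n * H.ballVol x √t))
          * (ENNReal.ofReal K * ENNReal.ofReal (H.ballVol x √t)) := by
        rw [H.ofReal_ballVol]
        gcongr
        exact H.lintegral_gaussianMajorant_le hc hr x
    _ = ENNReal.ofReal (C * K / t ^ n) := by
        rw [← ENNReal.ofReal_mul hK0, ← ENNReal.ofReal_mul (by positivity)]
        congr 1
        field_simp

lemma integrable_kernelDeriv (n : ℕ) {t : ℝ} (ht : t ∈ Ioc (0 : ℝ) 1) (x : M) :
    Integrable (H.kernelDeriv n t x) H.μ := by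
  obtain ⟨C, -, hC⟩ := H.exists_lintegral_enorm_kernelDeriv_le n
  exact ⟨(H.measurable_kernelDeriv_right n ht.1 x).aestronglyMeasurable,
    (hC t ht x).trans_lt ENNReal.ofReal_lt_top⟩

lemma exists_integral_abs_kernelDeriv_le (n : ℕ) : ∃ C ≥ 0, ∀ t ∈ Ioc (0 : ℝ) 1, ∀ x,
    ∫ y, |H.kernelDeriv n t x y| ∂H.μ ≤ C / t ^ n := by
  obtain ⟨C, hC0, hC⟩ := H.exists_lintegral_enorm_kernelDeriv_le n
  refine ⟨C, hC0, fun t ht x => ?_⟩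
  have ht0 := ht.1
  rw [← integral_congr_ae (.of_forall fun y => Real.norm_eq_abs (H.kernelDeriv n t x y)),
    integral_norm_eq_lintegral_enorm (H.integrable_kernelDeriv n ht x).aestronglyMeasurable]
  exact ENNReal.toReal_le_of_le_ofReal (by positivity) (hC t ht x)

lemma exists_integrable_forall_abs_kernelDeriv_le (n : ℕ) {t₀ : ℝ} (ht₀ : 0 < t₀) (x : M) :
    ∃ k : M → ℝ, Integrable k H.μ ∧
      ∀ᵐ y ∂H.μ, ∀ t ∈ Icc t₀ 1, |H.kernelDeriv n t x y| ≤ k y := by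
  obtain ⟨C, hC, c, hc, h_bound⟩ := H.exists_abs_kernelDeriv_le n
  have hr₀ : 0 < √t₀ := Real.sqrt_pos.2 ht₀
  have hV := H.ballVol_pos x hr₀
  have h_meas := H.measurable_gaussianMajorant c 1 x
  have h_fin : ∫⁻ y, H.gaussianMajorant c 1 x y ∂H.μ ≠ ⊤ :=
    ne_top_of_le_ne_top (ENNReal.mul_ne_top ENNReal.ofReal_ne_top (H.measure_ball_ne_top x 1))
      (H.lintegral_gaussianMajorant_le hc one_pos x)
  refine ⟨fun y => C / (t₀ ^ n * H.ballVol x √t₀) * (H.gaussianMajorant c 1 x y).toReal,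
    (integrable_toReal_of_lintegral_ne_top h_meas.aemeasurable h_fin).const_mul _, ?_⟩
  filter_upwards [ae_lt_top h_meas h_fin] with y hy t ⟨ht₀t, ht1⟩
  have ht : 0 < t := ht₀.trans_le ht₀t
  have : 0 < √t := Real.sqrt_pos.2 ht
  have h_exp : Real.exp (-c * (dist x y / √t) ^ 2) ≤ (H.gaussianMajorant c 1 x y).toReal := by
    rw [← ENNReal.ofReal_le_iff_le_toReal hy.ne]
    refine le_trans ?_ (H.ofReal_exp_le_gaussianMajorant hc one_pos x y)
    have : √t ≤ 1 := Real.sqrt_le_one.2 ht1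
    rw [neg_mul, neg_mul]
    gcongr
  refine (h_bound t ⟨ht, ht1⟩ x y).trans ?_
  have h_vol : H.ballVol x √t₀ ≤ H.ballVol x √t := H.ballVol_mono x (Real.sqrt_le_sqrt ht₀t)
  gcongr

end Kernel

section Semigroup

variable {M : Type*} [MeasurableSpace M] [MetricSpace M] (H : HeatKernelSetup M)
  {h : M → ℝ} {B : ℝ}

/-- The time derivative `∂_tⁿ (e^{-tL} h)(x)` of the semigroup. -/
def semigroupDeriv (n : ℕ) (t : ℝ) (h : M → ℝ) (x : M) : ℝ :=
  iteratedDeriv n (fun s => H.S s h x) t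

lemma semigroupDeriv_zero (t : ℝ) (h : M → ℝ) : H.semigroupDeriv 0 t h = H.S t h := by
  ext x
  simp [semigroupDeriv]

lemma semigroupDeriv_eq_integral (n : ℕ) {t : ℝ} (ht : 0 < t) (hh : BoundedMeasurable h B) (x : M) :
    H.semigroupDeriv n t h x = ∫ y, H.kernelDeriv n t x y * h y ∂H.μ :=
  H.diff_under_int h hh.measurable hh.supNorm_lt_top n x t ht

lemma measurable_semigroupDeriv (n : ℕ) {t : ℝ} (ht : 0 < t) (hh : BoundedMeasurable h B) :
    Measurable (H.semigroupDeriv n t h) := by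
  have := H.sigmaFinite
  rw [funext (H.semigroupDeriv_eq_integral n ht hh)]
  exact (StronglyMeasurable.integral_prod_right (f := fun x y => H.kernelDeriv n t x y * h y)
    ((H.measurable_kernelDeriv n ht).mul
      (hh.measurable.comp measurable_snd)).stronglyMeasurable).measurable

lemma boundedMeasurable_S {t : ℝ} (ht : 0 < t) (hh : BoundedMeasurable h B) :
    BoundedMeasurable (H.S t h) B where
  measurable := H.semigroupDeriv_zero t h ▸ H.measurable_semigroupDeriv 0 ht hh
  abs_le x := by
    have h_le := hh.abs_integral_mul_le (H.integrable_p ht x)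
    simp only [abs_of_nonneg (H.p_nonneg t ht x _), H.conservative t ht x, one_mul] at h_le
    exact h_le

lemma integrable_p_mul_p {s t : ℝ} (hs : 0 < s) (ht : 0 < t) (x : M) :
    Integrable (fun q : M × M => H.p s x q.1 * H.p t q.1 q.2) (H.μ.prod H.μ) := by
  have := H.sigmaFinite
  have h_meas : Measurable fun q : M × M => H.p s x q.1 * H.p t q.1 q.2 :=
    ((H.p_meas s hs).comp (measurable_const.prodMk measurable_fst)).mul (H.p_meas t ht)
  rw [integrable_prod_iff h_meas.aestronglyMeasurable]
  refine ⟨.of_forall fun y => (H.integrable_p ht y).const_mul (H.p s x y),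
    (H.integrable_p hs x).congr (.of_forall fun y => ?_)⟩
  simp only [norm_mul, Real.norm_of_nonneg (H.p_nonneg s hs x y),
    Real.norm_of_nonneg (H.p_nonneg t ht y _), integral_const_mul, H.conservative t ht y, mul_one]

lemma S_S {s t : ℝ} (hs : 0 < s) (ht : 0 < t) (hh : BoundedMeasurable h B) (x : M) :
    H.S s (H.S t h) x = H.S (s + t) h x := by
  have := H.sigmaFinite
  have h_int : Integrable (Function.uncurry fun y z => H.p s x y * H.p t y z * h z)
      (H.μ.prod H.μ) :=
    (H.integrable_p_mul_p hs ht x).mul_bdd (c := B)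
      (hh.measurable.comp measurable_snd).aestronglyMeasurable
      (.of_forall fun q => hh.abs_le q.2)
  calc ∫ y, H.p s x y * ∫ z, H.p t y z * h z ∂H.μ ∂H.μ
      = ∫ y, ∫ z, H.p s x y * H.p t y z * h z ∂H.μ ∂H.μ := by
        simp only [mul_assoc, integral_const_mul]
    _ = ∫ z, ∫ y, H.p s x y * H.p t y z * h z ∂H.μ ∂H.μ := integral_integral_swap h_int
    _ = ∫ z, H.p (s + t) x z * h z ∂H.μ := by
        simp only [integral_mul_const, H.semigroup s t hs ht]

lemma semigroupDeriv_S (n : ℕ) {s t : ℝ} (hs : 0 < s) (ht : 0 < t) (hh : BoundedMeasurable h B)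
    (x : M) : H.semigroupDeriv n s (H.S t h) x = H.semigroupDeriv n (s + t) h x := by
  have h_eq : (fun r => H.S r (H.S t h) x) =ᶠ[nhds s] fun r => H.S (r + t) h x := by
    filter_upwards [Ioi_mem_nhds hs] with r hr using H.S_S hr ht hh x
  exact h_eq.iteratedDeriv_eq n |>.trans
    (congrFun (iteratedDeriv_comp_add_const n (fun r => H.S r h x) t) s)

lemma exists_abs_semigroupDeriv_le (n : ℕ) : ∃ C ≥ 0, ∀ (h : M → ℝ) (B : ℝ),
    BoundedMeasurable h B → ∀ t > 0, ∀ x, |H.semigroupDeriv n t h x| ≤ C / min t 1 ^ n * B := by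
  obtain ⟨C, hC, h_int⟩ := H.exists_integral_abs_kernelDeriv_le n
  have h_small (h : M → ℝ) (B : ℝ) (hh : BoundedMeasurable h B) (t : ℝ) (ht : t ∈ Ioc (0 : ℝ) 1)
      (x : M) : |H.semigroupDeriv n t h x| ≤ C / t ^ n * B := by
    rw [H.semigroupDeriv_eq_integral n ht.1 hh]
    exact (hh.abs_integral_mul_le (H.integrable_kernelDeriv n ht x)).trans
      (mul_le_mul_of_nonneg_right (h_int t ht x) (hh.nonneg x))
  refine ⟨C, hC, fun h B hh t ht x => ?_⟩
  rcases le_or_gt t 1 with ht1 | ht1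
  · rw [min_eq_left ht1]
    exact h_small h B hh t ⟨ht, ht1⟩ x
  · have ht' : 0 < t - 1 := sub_pos.2 ht1
    have h_one := h_small _ B (H.boundedMeasurable_S ht' hh) 1 ⟨one_pos, le_rfl⟩ x
    rwa [H.semigroupDeriv_S n one_pos ht' hh, add_sub_cancel, ← min_eq_right ht1.le] at h_one

lemma hasDerivAt_semigroupDeriv_of_lt_one (n : ℕ) {t : ℝ} (ht : t ∈ Ioo (0 : ℝ) 1)
    (hh : BoundedMeasurable h B) (x : M) :
    HasDerivAt (fun s => H.semigroupDeriv n s h x) (H.semigroupDeriv (n + 1) t h x) t := by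
  obtain ⟨k, hk, h_dom⟩ :=
    H.exists_integrable_forall_abs_kernelDeriv_le (n + 1) (half_pos ht.1) x
  have h_nhds : Icc (t / 2) 1 ∈ nhds t := Icc_mem_nhds (half_lt_self ht.1) ht.2
  have h_meas (m : ℕ) {s : ℝ} (hs : 0 < s) :
      AEStronglyMeasurable (fun y => H.kernelDeriv m s x y * h y) H.μ :=
    ((H.measurable_kernelDeriv_right m hs x).mul hh.measurable).aestronglyMeasurable
  have h_deriv := (hasDerivAt_integral_of_dominated_loc_of_deriv_le
    (F := fun s y => H.kernelDeriv n s x y * h y)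
    (F' := fun s y => H.kernelDeriv (n + 1) s x y * h y) (bound := fun y => k y * B) h_nhds
    (Filter.eventually_of_mem (Ioi_mem_nhds ht.1) fun s hs => h_meas n hs)
    (hh.integrable_mul (H.integrable_kernelDeriv n ⟨ht.1, ht.2.le⟩ x))
    (h_meas (n + 1) ht.1)
    (h_dom.mono fun y hy s hs => by
      rw [norm_mul]
      exact mul_le_mul (hy s hs) (hh.abs_le y) (norm_nonneg _) ((abs_nonneg _).trans (hy s hs)))
    (hk.mul_const B)
    (.of_forall fun y s hs =>
      (H.hasDerivAt_kernelDeriv n ((half_pos ht.1).trans_le hs.1) x y).mul_const (h y))).2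
  rw [H.semigroupDeriv_eq_integral (n + 1) ht.1 hh]
  refine h_deriv.congr_of_eventuallyEq ?_
  filter_upwards [Ioi_mem_nhds ht.1] with s hs using H.semigroupDeriv_eq_integral n hs hh x

lemma hasDerivAt_semigroupDeriv (n : ℕ) {t : ℝ} (ht : 0 < t) (hh : BoundedMeasurable h B) (x : M) :
    HasDerivAt (fun s => H.semigroupDeriv n s h x) (H.semigroupDeriv (n + 1) t h x) t := by
  obtain ⟨δ, r, hδ, hr, rfl⟩ : ∃ δ r : ℝ, δ ∈ Ioo (0 : ℝ) 1 ∧ 0 < r ∧ δ + r = t :=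
    ⟨min t 1 / 2, t - min t 1 / 2, ⟨by positivity, by linarith [min_le_right t 1]⟩,
      by linarith [min_le_left t 1], add_sub_cancel _ _⟩
  have h_deriv := H.hasDerivAt_semigroupDeriv_of_lt_one n hδ (H.boundedMeasurable_S hr hh) x
  rw [H.semigroupDeriv_S (n + 1) hδ.1 hr hh] at h_deriv
  refine (HasDerivAt.comp_sub_const (δ + r) r (by rwa [add_sub_cancel_right])).congr_of_eventuallyEq
    (f := fun s => H.semigroupDeriv n (s - r) (H.S r h) x) ?_
  filter_upwards [Ioi_mem_nhds (lt_add_of_pos_left r hδ.1)] with s hs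
  rw [H.semigroupDeriv_S n (sub_pos.2 hs) hr hh, sub_add_cancel]

lemma exists_boundedMeasurable_semigroupDeriv (n : ℕ) {t : ℝ} (ht : 0 < t)
    (hh : BoundedMeasurable h B) : ∃ A, BoundedMeasurable (H.semigroupDeriv n t h) A :=
  let ⟨_, _, hC⟩ := H.exists_abs_semigroupDeriv_le n
  ⟨_, H.measurable_semigroupDeriv n ht hh, hC h B hh t ht⟩

lemma hasDerivAt_semigroupDeriv_semigroupDeriv (m n : ℕ) {s t : ℝ} (hs : s ∈ Ioc (0 : ℝ) 1)
    (ht : 0 < t) (hh : BoundedMeasurable h B) (x : M) :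
    HasDerivAt (fun r => H.semigroupDeriv m s (H.semigroupDeriv n r h) x)
      (H.semigroupDeriv m s (H.semigroupDeriv (n + 1) t h) x) t := by
  obtain ⟨A, hA⟩ := H.exists_boundedMeasurable_semigroupDeriv n ht hh
  obtain ⟨A', hA'⟩ := H.exists_boundedMeasurable_semigroupDeriv (n + 1) ht hh
  obtain ⟨C, hC, h_le⟩ := H.exists_abs_semigroupDeriv_le (n + 1)
  have h_pos {r : ℝ} (hr : r ∈ Ioi (t / 2)) : 0 < r := (half_pos ht).trans hr
  have h_le_half (r : ℝ) (hr : r ∈ Ioi (t / 2)) (y : M) :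
      |H.semigroupDeriv (n + 1) r h y| ≤ C / min (t / 2) 1 ^ (n + 1) * B := by
    have := hh.nonneg x
    refine (h_le h B hh r (h_pos hr) y).trans ?_
    gcongr
    exact hr.le
  rw [H.semigroupDeriv_eq_integral m hs.1 hA']
  refine (hasDerivAt_integral_mul_of_bounded (H.integrable_kernelDeriv m hs x)
    (Ioi_mem_nhds (half_lt_self ht)) (fun r hr => H.measurable_semigroupDeriv n (h_pos hr) hh)
    hA'.measurable hA.abs_le h_le_half fun r hr y =>
      H.hasDerivAt_semigroupDeriv n (h_pos hr) hh y).congr_of_eventuallyEq ?_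
  filter_upwards [Ioi_mem_nhds ht] with r hr
  obtain ⟨_, hD⟩ := H.exists_boundedMeasurable_semigroupDeriv n hr hh
  exact H.semigroupDeriv_eq_integral m hs.1 hD x

lemma semigroupDeriv_semigroupDeriv (m n : ℕ) {s t : ℝ} (hs : s ∈ Ioc (0 : ℝ) 1) (ht : 0 < t)
    (hh : BoundedMeasurable h B) (x : M) :
    H.semigroupDeriv m s (H.semigroupDeriv n t h) x = H.semigroupDeriv (m + n) (s + t) h x := by
  induction n generalizing t with
  | zero =>
    rw [semigroupDeriv_zero]
    exact H.semigroupDeriv_S m hs.1 ht hh x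
  | succ n ih =>
    have h_outside := (H.hasDerivAt_semigroupDeriv (m + n) (add_pos hs.1 ht) hh x).comp_const_add
      s t
    refine (H.hasDerivAt_semigroupDeriv_semigroupDeriv m n hs ht hh x).unique
      (h_outside.congr_of_eventuallyEq ?_)
    filter_upwards [Ioi_mem_nhds ht] with r hr using ih hr

end Semigroup

section FrequencyProjections

variable {M : Type*} [MeasurableSpace M] [MetricSpace M] (H : HeatKernelSetup M)
  {h : M → ℝ} {B : ℝ}

lemma Q_eq_neg_pow_mul (n : ℕ) (t : ℝ) (h : M → ℝ) (x : M) :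
    H.Q n t h x = (-t) ^ n * H.semigroupDeriv n t h x := by
  rw [Q, semigroupDeriv, neg_pow t]

lemma Q_zero (t : ℝ) (h : M → ℝ) : H.Q 0 t h = H.S t h := by
  ext x
  simp [Q]

lemma P_eq_sum_Q (b : ℕ) (t : ℝ) (h : M → ℝ) (x : M) :
    H.P b t h x = ∑ k ∈ Finset.range b, (k.factorial : ℝ)⁻¹ * H.Q k t h x :=
  Finset.sum_congr rfl fun _ _ => by simp only [Q, mul_assoc]

lemma LP_eq_sum_Q (b : ℕ) (t : ℝ) (h : M → ℝ) (x : M) :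
    H.LP b t h x = ∑ k ∈ Finset.range b, (k.factorial : ℝ)⁻¹ * H.Q (k + 1) t h x :=
  Finset.sum_congr rfl fun _ _ => by simp only [Q, mul_assoc]

lemma Q_const_mul (n : ℕ) (t c : ℝ) (h : M → ℝ) (x : M) :
    H.Q n t (fun y => c * h y) x = c * H.Q n t h x := by
  have h_S (s : ℝ) : H.S s (fun y => c * h y) x = c * H.S s h x := by
    simp only [S, mul_left_comm, integral_const_mul]
  simp only [Q, h_S, iteratedDeriv_const_mul_field]
  ring

lemma Q_sum {ι : Type*} (F : Finset ι) {v : ι → M → ℝ} {A : ι → ℝ}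
    (hv : ∀ i ∈ F, BoundedMeasurable (v i) (A i)) (n : ℕ) {s : ℝ} (hs : s ∈ Ioc (0 : ℝ) 1) (x : M) :
    H.Q n s (fun y => ∑ i ∈ F, v i y) x = ∑ i ∈ F, H.Q n s (v i) x := by
  simp only [Q_eq_neg_pow_mul, ← Finset.mul_sum]
  rw [H.semigroupDeriv_eq_integral n hs.1 (BoundedMeasurable.sum hv),
    Finset.sum_congr rfl fun i hi => H.semigroupDeriv_eq_integral n hs.1 (hv i hi) x,
    ← integral_finsetSum F fun i hi => (hv i hi).integrable_mul (H.integrable_kernelDeriv n hs x)]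
  simp only [Finset.mul_sum]

lemma Q_add {h₁ h₂ : M → ℝ} {B₁ B₂ : ℝ} (hh₁ : BoundedMeasurable h₁ B₁)
    (hh₂ : BoundedMeasurable h₂ B₂) (n : ℕ) {s : ℝ} (hs : s ∈ Ioc (0 : ℝ) 1) (x : M) :
    H.Q n s (fun y => h₁ y + h₂ y) x = H.Q n s h₁ x + H.Q n s h₂ x := by
  have hk := H.integrable_kernelDeriv n hs x
  simp only [Q_eq_neg_pow_mul, ← mul_add]
  rw [H.semigroupDeriv_eq_integral n hs.1 (hh₁.add hh₂), H.semigroupDeriv_eq_integral n hs.1 hh₁,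
    H.semigroupDeriv_eq_integral n hs.1 hh₂,
    ← integral_add (hh₁.integrable_mul hk) (hh₂.integrable_mul hk)]
  simp only [mul_add]

lemma Q_Q (m n : ℕ) {s t : ℝ} (hs : s ∈ Ioc (0 : ℝ) 1) (ht : 0 < t) (hh : BoundedMeasurable h B)
    (x : M) :
    H.Q m s (H.Q n t h) x
      = s ^ m * t ^ n / (s + t) ^ (m + n) * H.Q (m + n) (s + t) h x := by
  have hst : 0 < s + t := add_pos hs.1 ht
  rw [funext (H.Q_eq_neg_pow_mul n t h), Q_const_mul, Q_eq_neg_pow_mul, Q_eq_neg_pow_mul,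
    H.semigroupDeriv_semigroupDeriv m n hs ht hh, neg_pow s, neg_pow t, neg_pow (s + t),
    pow_add (-1)]
  field_simp

lemma exists_boundedMeasurable_Q (n : ℕ) : ∃ C ≥ 0, ∀ (h : M → ℝ) (B : ℝ),
    BoundedMeasurable h B → ∀ t ∈ Ioc (0 : ℝ) 2, BoundedMeasurable (H.Q n t h) (C * B) := by
  obtain ⟨C, hC, h_le⟩ := H.exists_abs_semigroupDeriv_le n
  refine ⟨2 ^ n * C, by positivity, fun h B hh t ⟨ht, ht2⟩ => ⟨?_, fun x => ?_⟩⟩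
  · rw [funext (H.Q_eq_neg_pow_mul n t h)]
    exact (H.measurable_semigroupDeriv n ht hh).const_mul _
  · have := hh.nonneg x
    have h_min : t ≤ 2 * min t 1 := by
      rcases min_cases t 1 with ⟨h, -⟩ | ⟨h, -⟩ <;> rw [h] <;> linarith
    have : 0 < min t 1 := lt_min ht one_pos
    rw [Q_eq_neg_pow_mul, abs_mul, abs_pow, abs_neg, abs_of_pos ht]
    calc t ^ n * |H.semigroupDeriv n t h x|
        ≤ (2 * min t 1) ^ n * (C / min t 1 ^ n * B) := by
          gcongr
          exact h_le h B hh t ht x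
      _ = 2 ^ n * C * B := by
          rw [mul_pow]
          field_simp

lemma exists_boundedMeasurable_P (b : ℕ) : ∃ C ≥ 0, ∀ (h : M → ℝ) (B : ℝ),
    BoundedMeasurable h B → ∀ t ∈ Ioc (0 : ℝ) 1, BoundedMeasurable (H.P b t h) (C * B) := by
  choose C hC hQ using H.exists_boundedMeasurable_Q
  refine ⟨∑ k ∈ Finset.range b, |(k.factorial : ℝ)⁻¹| * C k,
    Finset.sum_nonneg fun k _ => mul_nonneg (abs_nonneg _) (hC k), fun h B hh t ht => ?_⟩
  rw [funext (H.P_eq_sum_Q b t h), Finset.sum_mul]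
  simp only [mul_assoc]
  exact BoundedMeasurable.sum fun k _ => (hQ k h B hh t ⟨ht.1, by linarith [ht.2]⟩).const_mul _

/- Almost orthogonality: for `n ≥ 1` the factor `s ^ m * t ^ n / (s + t) ^ (m + n)` of `Q_Q` decays
when `t ≪ s`; when `s ≪ t` this requires `m ≥ 1`. -/
lemma exists_abs_Q_Q_le (m : ℕ) {n : ℕ} (hn : 1 ≤ n) : ∃ C ≥ 0, ∀ (h : M → ℝ) (B : ℝ),
    BoundedMeasurable h B → ∀ s ∈ Ioc (0 : ℝ) 1, ∀ t ∈ Ioc (0 : ℝ) 1, (1 ≤ m ∨ t ≤ s) →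
      ∀ x, |H.Q m s (H.Q n t h) x| ≤ C * B * (s * t / (s + t) ^ 2) := by
  obtain ⟨C, hC, hQ⟩ := H.exists_boundedMeasurable_Q (m + n)
  refine ⟨2 * C, by positivity, fun h B hh s hs t ht hm x => ?_⟩
  have hs0 := hs.1
  have ht0 := ht.1
  have hst : s + t ∈ Ioc (0 : ℝ) 2 := ⟨by positivity, by linarith [hs.2, ht.2]⟩
  rw [H.Q_Q m n hs ht0 hh, abs_mul, abs_of_nonneg (by positivity)]
  calc s ^ m * t ^ n / (s + t) ^ (m + n) * |H.Q (m + n) (s + t) h x|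
      ≤ 2 * (s * t / (s + t) ^ 2) * (C * B) := by
        gcongr
        · exact pow_mul_pow_div_add_pow_le hn hs0 ht0 hm
        · exact (hQ h B hh _ hst).abs_le x
    _ = 2 * C * B * (s * t / (s + t) ^ 2) := by ring

lemma boundedMeasurable_LP (b : ℕ) {t : ℝ} (ht : t ∈ Ioc (0 : ℝ) 1) (hh : BoundedMeasurable h B) :
    ∃ A, BoundedMeasurable (H.LP b t h) A := by
  choose C _ hQ using H.exists_boundedMeasurable_Q
  rw [funext (H.LP_eq_sum_Q b t h)]
  exact ⟨_, BoundedMeasurable.sum fun k _ =>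
    (hQ (k + 1) h B hh t ⟨ht.1, by linarith [ht.2]⟩).const_mul _⟩

lemma Q_LP (m b : ℕ) {s t : ℝ} (hs : s ∈ Ioc (0 : ℝ) 1) (ht : t ∈ Ioc (0 : ℝ) 1)
    (hh : BoundedMeasurable h B) (x : M) :
    H.Q m s (H.LP b t h) x
      = ∑ k ∈ Finset.range b, (k.factorial : ℝ)⁻¹ * H.Q m s (H.Q (k + 1) t h) x := by
  choose C _ hQ using H.exists_boundedMeasurable_Q
  rw [funext (H.LP_eq_sum_Q b t h), H.Q_sum _ (fun k _ =>
    (hQ (k + 1) h B hh t ⟨ht.1, by linarith [ht.2]⟩).const_mul _) m hs x]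
  simp only [Q_const_mul]

lemma exists_abs_Q_LP_le (m b : ℕ) : ∃ C ≥ 0, ∀ (h : M → ℝ) (B : ℝ),
    BoundedMeasurable h B → ∀ s ∈ Ioc (0 : ℝ) 1, ∀ t ∈ Ioc (0 : ℝ) 1, (1 ≤ m ∨ t ≤ s) →
      ∀ x, |H.Q m s (H.LP b t h) x| ≤ C * B * (s * t / (s + t) ^ 2) := by
  choose C hC h_QQ using fun k : ℕ => H.exists_abs_Q_Q_le m k.succ_pos
  refine ⟨∑ k ∈ Finset.range b, (k.factorial : ℝ)⁻¹ * C k,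
    Finset.sum_nonneg fun k _ => mul_nonneg (by positivity) (hC k),
    fun h B hh s hs t ht hm x => ?_⟩
  rw [H.Q_LP m b hs ht hh, Finset.sum_mul, Finset.sum_mul]
  refine (Finset.abs_sum_le_sum_abs _ _).trans (Finset.sum_le_sum fun k _ => ?_)
  rw [abs_mul, abs_of_nonneg (by positivity), mul_assoc, mul_assoc, ← mul_assoc (C k)]
  exact mul_le_mul_of_nonneg_left (h_QQ k h B hh s hs t ht hm x) (by positivity)

end FrequencyProjections

section Holder

variable {M : Type*} [MeasurableSpace M] [MetricSpace M] (H : HeatKernelSetup M)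
  {f : M → ℝ} {a : ℕ} {A B β : ℝ}

/-- `HolderBound a β A f` says that `‖e^{-L} f‖_∞ ≤ A` and `‖Q_t^{(a)} f‖_∞ ≤ A t^β` for
`0 < t ≤ 1`: a real-valued bound on the Hölder norm `‖f‖_{C^σ,(a)}` with `β = σ / 2`. -/
structure HolderBound (a : ℕ) (β A : ℝ) (f : M → ℝ) : Prop where
  abs_S_one_le : ∀ x, |H.S 1 f x| ≤ A
  abs_Q_le : ∀ t ∈ Ioc (0 : ℝ) 1, ∀ x, |H.Q a t f x| ≤ A * t ^ β

lemma holderBound_toReal_CNorm {σ : ℝ} (hf : H.CNorm a σ f < ⊤) :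
    H.HolderBound a (σ / 2) (H.CNorm a σ f).toReal f where
  abs_S_one_le x := by
    have h_le : supNorm (H.S 1 f) ≤ H.CNorm a σ f := le_self_add
    exact (abs_le_toReal_supNorm (h_le.trans_lt hf) x).trans (ENNReal.toReal_mono hf.ne h_le)
  abs_Q_le t ht x := by
    have h_weight : ENNReal.ofReal (t ^ (-σ / 2)) * supNorm (H.Q a t f) ≤ H.CNorm a σ f :=
      (le_iSup₂ (f := fun t _ => ENNReal.ofReal (t ^ (-σ / 2)) * supNorm (H.Q a t f))
        t ht).trans le_add_self
    have h_pos : 0 < t ^ (σ / 2) := Real.rpow_pos_of_pos ht.1 _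
    have h_sup : ENNReal.ofReal |H.Q a t f x| ≤ supNorm (H.Q a t f) := by
      rw [← Real.enorm_eq_ofReal_abs]
      exact le_iSup (fun x => (‖H.Q a t f x‖₊ : ℝ≥0∞)) x
    have h_le := ENNReal.toReal_mono hf.ne ((mul_le_mul_right h_sup _).trans h_weight)
    rwa [ENNReal.toReal_mul, ENNReal.toReal_ofReal (abs_nonneg _),
      ENNReal.toReal_ofReal (Real.rpow_nonneg ht.1.le _), neg_div, Real.rpow_neg ht.1.le,
      inv_mul_le_iff₀ h_pos, mul_comm] at h_le

lemma exists_holderBound_zero (a : ℕ) (hf : BoundedMeasurable f B) :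
    ∃ A, H.HolderBound a 0 A f := by
  obtain ⟨C, -, hQ⟩ := H.exists_boundedMeasurable_Q a
  refine ⟨max B (C * B), ⟨fun x => ?_, fun t ht x => ?_⟩⟩
  · exact ((H.boundedMeasurable_S one_pos hf).abs_le x).trans (le_max_left _ _)
  · rw [Real.rpow_zero, mul_one]
    exact ((hQ f B hf t ⟨ht.1, by linarith [ht.2]⟩).abs_le x).trans (le_max_right _ _)

/-- `ControlsQ a β j` says that a Hölder bound, which is a decay bound on `Q_t^{(a)} f`, implies the
same decay `‖Q_t^{(j)} f‖_∞ ≲ t^β` for `Q_t^{(j)} f`, uniformly in `f`. The range `0 < t ≤ 2` leaves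
room for the half-time composition `Q_{t/2} Q_{t/2}`. -/
def ControlsQ (a : ℕ) (β : ℝ) (j : ℕ) : Prop :=
  ∃ C ≥ 0, ∀ (f : M → ℝ) (B A : ℝ), BoundedMeasurable f B → H.HolderBound a β A f →
    ∀ t ∈ Ioc (0 : ℝ) 2, ∀ x, |H.Q j t f x| ≤ C * A * t ^ β

lemma controlsQ_of_le (β : ℝ) {j : ℕ} (hj : a ≤ j) : H.ControlsQ a β j := by
  obtain ⟨C, hC, hQ⟩ := H.exists_boundedMeasurable_Q (j - a)
  obtain ⟨C', -, hQ'⟩ := H.exists_boundedMeasurable_Q a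
  refine ⟨2 ^ j * C * (1 / 2) ^ β, by positivity, fun f B A hf hA t ht x => ?_⟩
  have ht0 := ht.1
  have h_half : t / 2 ∈ Ioc (0 : ℝ) 1 := ⟨by positivity, by linarith [ht.2]⟩
  have h_half' : t / 2 ∈ Ioc (0 : ℝ) 2 := ⟨h_half.1, by linarith [h_half.2]⟩
  have h_inner : BoundedMeasurable (H.Q a (t / 2) f) (A * (t / 2) ^ β) :=
    ⟨(hQ' f B hf _ h_half').measurable, hA.abs_Q_le _ h_half⟩
  have h_comp : H.Q j t f x = 2 ^ j * H.Q (j - a) (t / 2) (H.Q a (t / 2) f) x := by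
    rw [H.Q_Q _ _ h_half h_half.1 hf, add_halves, ← pow_add, Nat.sub_add_cancel hj, div_pow]
    field_simp
  calc |H.Q j t f x| = 2 ^ j * |H.Q (j - a) (t / 2) (H.Q a (t / 2) f) x| := by
        rw [h_comp, abs_mul, abs_of_pos (by positivity)]
    _ ≤ 2 ^ j * (C * (A * (t / 2) ^ β)) := by
        gcongr
        exact (hQ _ _ h_inner _ h_half').abs_le x
    _ = 2 ^ j * C * (1 / 2) ^ β * A * t ^ β := by
        rw [div_eq_mul_one_div t 2, Real.mul_rpow ht0.le (by norm_num)]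
        ring

/- Integrate `∂_t^{j+1} e^{-tL} f = O(t^{β-j-1})` from `t` to `2`; at the endpoint
`∂_t^j e^{-2L} f = ∂_t^j e^{-L} (e^{-L} f)` is controlled by `‖e^{-L} f‖_∞`. -/
lemma ControlsQ.of_succ {H : HeatKernelSetup M} {j : ℕ} (hj : H.ControlsQ a β (j + 1))
    (hβ : β < j) : H.ControlsQ a β j := by
  obtain ⟨C, hC, hQ⟩ := hj
  obtain ⟨C', hC', h_end⟩ := H.exists_abs_semigroupDeriv_le j
  have he : β - j < 0 := sub_neg.2 hβ
  have he' : 0 < -(β - j) := neg_pos.2 he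
  refine ⟨C' * 2 ^ (-(β - j)) + C / (-(β - j)), by positivity, fun f B A hf hA t ht x => ?_⟩
  have ht0 := ht.1
  have hA0 : 0 ≤ A := (abs_nonneg _).trans (hA.abs_S_one_le x)
  have h_S : BoundedMeasurable (H.S 1 f) A :=
    ⟨(H.boundedMeasurable_S one_pos hf).measurable, hA.abs_S_one_le⟩
  have h_deriv (r : ℝ) (hr : r ∈ Icc t 2) :
      ‖H.semigroupDeriv (j + 1) r f x‖ ≤ C * A * r ^ (β - j - 1) := by
    have hr0 : 0 < r := ht0.trans_le hr.1
    have h_le := hQ f B A hf hA r ⟨hr0, hr.2⟩ x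
    rw [Q_eq_neg_pow_mul, abs_mul, abs_pow, abs_neg, abs_of_pos hr0] at h_le
    rw [sub_sub, ← Nat.cast_add_one, Real.rpow_sub_natCast hr0.ne', mul_div_assoc',
      le_div_iff₀ (by positivity), mul_comm]
    exact h_le
  have h_two : ‖H.semigroupDeriv j 2 f x‖ ≤ C' * A := by
    have h_le := h_end _ A h_S 1 one_pos x
    rwa [H.semigroupDeriv_S j one_pos one_pos hf, one_add_one_eq_two, min_self, one_pow,
      div_one] at h_le
  have h_one_le : 1 ≤ 2 ^ (-(β - j)) * t ^ (β - j) := by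
    rw [Real.rpow_neg two_pos.le, le_inv_mul_iff₀ (by positivity), mul_one]
    exact Real.rpow_le_rpow_of_nonpos ht0 ht.2 he.le
  rw [Q_eq_neg_pow_mul, abs_mul, abs_pow, abs_neg, abs_of_pos ht0]
  calc t ^ j * |H.semigroupDeriv j t f x|
      ≤ t ^ j * (C' * A * (2 ^ (-(β - j)) * t ^ (β - j)) + C * A / (-(β - j)) * t ^ (β - j)) := by
        gcongr
        refine (norm_le_norm_add_rpow_of_norm_deriv_le ht0 ht.2 he (fun r hr =>
          H.hasDerivAt_semigroupDeriv j (ht0.trans_le hr.1) hf x) h_deriv).trans ?_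
        gcongr
        exact h_two.trans (le_mul_of_one_le_right (by positivity) h_one_le)
    _ = (C' * 2 ^ (-(β - j)) + C / (-(β - j))) * A * t ^ β := by
        rw [Real.rpow_sub_natCast ht0.ne']
        field_simp

lemma controlsQ (a : ℕ) {j : ℕ} (hβ : β < j) : H.ControlsQ a β j :=
  Nat.decreasingInduction' (P := H.ControlsQ a β)
    (fun _ _ hk h => h.of_succ (hβ.trans_le (Nat.cast_le.2 hk))) (Nat.le_add_left j a)
    (H.controlsQ_of_le β (Nat.le_add_right a j))

lemma exists_abs_LP_le_mul_rpow (a b : ℕ) (hβ : β < 1) : ∃ C ≥ 0, ∀ (f : M → ℝ) (B A : ℝ),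
    BoundedMeasurable f B → H.HolderBound a β A f →
      ∀ t ∈ Ioc (0 : ℝ) 1, ∀ x, |H.LP b t f x| ≤ C * A * t ^ β := by
  have h_lt (k : ℕ) : β < (k + 1 : ℕ) :=
    hβ.trans_le (Nat.one_le_cast.2 k.succ_pos)
  choose C hC hQ using fun k : ℕ => H.controlsQ a (h_lt k)
  refine ⟨∑ k ∈ Finset.range b, (k.factorial : ℝ)⁻¹ * C k,
    Finset.sum_nonneg fun k _ => mul_nonneg (by positivity) (hC k), fun f B A hf hA t ht x => ?_⟩
  rw [LP_eq_sum_Q, Finset.sum_mul, Finset.sum_mul]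
  refine (Finset.abs_sum_le_sum_abs _ _).trans (Finset.sum_le_sum fun k _ => ?_)
  rw [abs_mul, abs_of_nonneg (by positivity), mul_assoc, mul_assoc, ← mul_assoc (C k)]
  exact mul_le_mul_of_nonneg_left (hQ k f B A hf hA t ⟨ht.1, by linarith [ht.2]⟩ x) (by positivity)

end Holder

section TimeFamily

variable {M : Type*} [MeasurableSpace M] [MetricSpace M] (H : HeatKernelSetup M)
  {w : ℝ → M → ℝ} {f g : M → ℝ} {A B : ℝ}

lemma isTimeFamily_Q (hw : IsTimeFamily w) (n : ℕ) : IsTimeFamily fun t => H.Q n t (w t) := by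
  have := H.sigmaFinite
  obtain ⟨C, -, hQ⟩ := H.exists_boundedMeasurable_Q n
  refine ⟨?_, fun t ht => ?_⟩
  · have h_eq (q : Ioc (0 : ℝ) 1 × M) : H.Q n q.1 (w q.1) q.2
        = (-q.1) ^ n * ∫ y, H.kernelDeriv n q.1 q.2 y * w q.1 y ∂H.μ := by
      obtain ⟨B, hB⟩ := hw.exists_boundedMeasurable q.1.2
      rw [Q_eq_neg_pow_mul, H.semigroupDeriv_eq_integral n q.1.2.1 hB]
    rw [funext h_eq]
    refine Measurable.mul (by fun_prop) (StronglyMeasurable.integral_prod_right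
      (f := fun (q : Ioc (0 : ℝ) 1 × M) y => H.kernelDeriv n q.1 q.2 y * w q.1 y)
      (Measurable.mul ?_ ?_).stronglyMeasurable).measurable
    · exact (H.measurable_kernelDeriv_subtype n).comp (MeasurableEquiv.prodAssoc.measurable)
    · exact hw.measurable.comp ((measurable_fst.comp measurable_fst).prodMk measurable_snd)
  · obtain ⟨B, hB⟩ := hw.exists_boundedMeasurable ht
    exact ⟨_, (hQ _ _ hB t ⟨ht.1, by linarith [ht.2]⟩).abs_le⟩

lemma isTimeFamily_P (hw : IsTimeFamily w) (b : ℕ) : IsTimeFamily fun t => H.P b t (w t) := by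
  rw [show (fun t => H.P b t (w t)) = _ from
    funext fun t => funext fun x => H.P_eq_sum_Q b t (w t) x]
  exact .sum fun k _ => (H.isTimeFamily_Q hw k).const_mul _

lemma isTimeFamily_LP (hw : IsTimeFamily w) (b : ℕ) : IsTimeFamily fun t => H.LP b t (w t) := by
  rw [show (fun t => H.LP b t (w t)) = _ from
    funext fun t => funext fun x => H.LP_eq_sum_Q b t (w t) x]
  exact .sum fun k _ => (H.isTimeFamily_Q hw (k + 1)).const_mul _

lemma isTimeFamily_paraInner (hg : BoundedMeasurable g A) (hf : BoundedMeasurable f B) (b : ℕ) :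
    IsTimeFamily (H.paraInner b g f) :=
  (H.isTimeFamily_LP
    ((H.isTimeFamily_Q (.const hf) (b - 1)).mul (H.isTimeFamily_P (.const hg) b)) b).add
  (H.isTimeFamily_Q
    ((H.isTimeFamily_LP (.const hf) b).mul (H.isTimeFamily_P (.const hg) b)) (b - 1))

lemma aemeasurable_Q (hw : IsTimeFamily w) (m : ℕ) {s : ℝ} (hs : 0 < s) (x : M) :
    AEMeasurable (fun t => H.Q m s (w t) x) (volume.restrict (Ioc 0 1)) := by
  have := H.sigmaFinite
  have h_eq (t : Ioc (0 : ℝ) 1) : H.Q m s (w t) x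
      = (-s) ^ m * ∫ y, H.kernelDeriv m s x y * w t y ∂H.μ := by
    obtain ⟨B, hB⟩ := hw.exists_boundedMeasurable t.2
    rw [Q_eq_neg_pow_mul, H.semigroupDeriv_eq_integral m hs hB]
  refine aemeasurable_restrict_of_measurable_subtype measurableSet_Ioc ?_
  rw [funext h_eq]
  exact ((StronglyMeasurable.integral_prod_right
    (f := fun (t : Ioc (0 : ℝ) 1) y => H.kernelDeriv m s x y * w t y)
    (((H.measurable_kernelDeriv_right m hs x).comp measurable_snd).mul
      hw.measurable).stronglyMeasurable).measurable).const_mul _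

end TimeFamily

section Paraproduct

variable {M : Type*} [MeasurableSpace M] [MetricSpace M] (H : HeatKernelSetup M)
  {b : ℕ} {α β : ℝ}

lemma exists_abs_Q_paraInner_le (hb : 2 ≤ b) (hβ : β < 1) (m : ℕ) :
    ∃ C ≥ 0, ∀ (f g : M → ℝ) (A B G : ℝ), BoundedMeasurable f B → H.HolderBound (b - 1) β A f →
      BoundedMeasurable g G → ∀ s ∈ Ioc (0 : ℝ) 1, ∀ t ∈ Ioc (0 : ℝ) 1, (1 ≤ m ∨ t ≤ s) →
        ∀ x, |H.Q m s (H.paraInner b g f t) x| ≤ C * A * G * t ^ β * (s * t / (s + t) ^ 2) := by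
  obtain ⟨C₁, hC₁, h_QLP⟩ := H.exists_abs_Q_LP_le m b
  obtain ⟨C₂, hC₂, h_QQ⟩ := H.exists_abs_Q_Q_le m (Nat.le_sub_one_of_lt hb)
  obtain ⟨C_P, hC_P, hP⟩ := H.exists_boundedMeasurable_P b
  obtain ⟨C_L, hC_L, hLP⟩ := H.exists_abs_LP_le_mul_rpow (b - 1) b hβ
  obtain ⟨_, _, hQ⟩ := H.exists_boundedMeasurable_Q (b - 1)
  refine ⟨C₁ * C_P + C₂ * C_L * C_P, by positivity, fun f g A B G hf hA hg s hs t ht hm x => ?_⟩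
  have ht' : t ∈ Ioc (0 : ℝ) 2 := ⟨ht.1, by linarith [ht.2]⟩
  obtain ⟨_, hLf⟩ := H.boundedMeasurable_LP b ht hf
  have hQP : BoundedMeasurable (fun z => H.Q (b - 1) t f z * H.P b t g z)
      (A * t ^ β * (C_P * G)) :=
    .mul ⟨(hQ f B hf t ht').measurable, hA.abs_Q_le t ht⟩ (hP g G hg t ht)
  have hLPP : BoundedMeasurable (fun z => H.LP b t f z * H.P b t g z)
      (C_L * A * t ^ β * (C_P * G)) :=
    .mul ⟨hLf.measurable, hLP f B A hf hA t ht⟩ (hP g G hg t ht)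
  obtain ⟨_, h_left⟩ := H.boundedMeasurable_LP b ht hQP
  calc |H.Q m s (H.paraInner b g f t) x|
      = |H.Q m s (H.LP b t fun z => H.Q (b - 1) t f z * H.P b t g z) x
          + H.Q m s (H.Q (b - 1) t fun z => H.LP b t f z * H.P b t g z) x| :=
        congrArg _ (H.Q_add h_left (hQ _ _ hLPP t ht') m hs x)
    _ ≤ C₁ * (A * t ^ β * (C_P * G)) * (s * t / (s + t) ^ 2)
          + C₂ * (C_L * A * t ^ β * (C_P * G)) * (s * t / (s + t) ^ 2) :=
        (abs_add_le _ _).trans (add_le_add (h_QLP _ _ hQP s hs t ht hm x)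
          (h_QQ _ _ hLPP s hs t ht hm x))
    _ = (C₁ * C_P + C₂ * C_L * C_P) * A * G * t ^ β * (s * t / (s + t) ^ 2) := by ring

lemma exists_norm_Q_paraInner_div_le (hb : 2 ≤ b) (hβ : β < 1) (m : ℕ) :
    ∃ C ≥ 0, ∀ (f g : M → ℝ) (A B G : ℝ), BoundedMeasurable f B → H.HolderBound (b - 1) β A f →
      BoundedMeasurable g G → ∀ s ∈ Ioc (0 : ℝ) 1, (1 ≤ m ∨ s = 1) → ∀ x,
        ∀ᵐ t ∂volume.restrict (Ioc (0 : ℝ) 1),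
          ‖H.Q m s (H.paraInner b g f t) x / t‖ ≤ C * A * G * (s * t ^ β / (s + t) ^ 2) := by
  obtain ⟨C, hC, h_le⟩ := H.exists_abs_Q_paraInner_le hb hβ m
  refine ⟨C, hC, fun f g A B G hf hA hg s hs hm x => ?_⟩
  filter_upwards [ae_restrict_mem measurableSet_Ioc] with t ht
  have hm' : 1 ≤ m ∨ t ≤ s := hm.imp_right fun h => ht.2.trans_eq h.symm
  have hst : s + t ≠ 0 := (add_pos hs.1 ht.1).ne'
  rw [norm_div, Real.norm_eq_abs, Real.norm_of_nonneg ht.1.le, div_le_iff₀ ht.1]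
  exact (h_le f g A B G hf hA hg s hs t ht hm' x).trans_eq (by field_simp)

lemma integrableOn_Q_paraInner_div (hb : 2 ≤ b) {f g : M → ℝ} {B G : ℝ}
    (hf : BoundedMeasurable f B) (hg : BoundedMeasurable g G) {m : ℕ} {s : ℝ}
    (hs : s ∈ Ioc (0 : ℝ) 1) (hm : 1 ≤ m ∨ s = 1) (x : M) :
    IntegrableOn (fun t => H.Q m s (H.paraInner b g f t) x / t) (Ioc 0 1) := by
  obtain ⟨A, hA⟩ := H.exists_holderBound_zero (b - 1) hf
  obtain ⟨C, -, h_le⟩ := H.exists_norm_Q_paraInner_div_le hb one_pos m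
  have h_meas := (H.aemeasurable_Q (H.isTimeFamily_paraInner hg hf b) m hs.1 x).div aemeasurable_id
  have h_dom : IntegrableOn (fun t => s * t ^ (0 : ℝ) / (s + t) ^ 2) (Ioc 0 1) :=
    (integrableOn_mul_rpow_div_add_sq ⟨by norm_num, by norm_num⟩ hs.1).mono_set Ioc_subset_Ioi_self
  exact (h_dom.const_mul (C * A * G)).mono' h_meas.aestronglyMeasurable
    (h_le f g A B G hf hA hg s hs hm x)

lemma exists_abs_integral_Q_paraInner_div_le (hb : 2 ≤ b) (hβ : β ∈ Ioo (-1 : ℝ) 1) (m : ℕ) :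
    ∃ C ≥ 0, ∀ (f g : M → ℝ) (A B G : ℝ), BoundedMeasurable f B → H.HolderBound (b - 1) β A f →
      BoundedMeasurable g G → ∀ s ∈ Ioc (0 : ℝ) 1, (1 ≤ m ∨ s = 1) → ∀ x,
        |∫ t in Ioc (0 : ℝ) 1, H.Q m s (H.paraInner b g f t) x / t| ≤ C * A * G * s ^ β := by
  obtain ⟨C, hC, h_le⟩ := H.exists_norm_Q_paraInner_div_le hb hβ.2 m
  set K := ∫ u in Ioi (0 : ℝ), u ^ β / (1 + u) ^ 2
  have hK0 : 0 ≤ K := setIntegral_nonneg measurableSet_Ioi fun u (hu : 0 < u) => by positivity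
  refine ⟨C * K, by positivity, fun f g A B G hf hA hg s hs hm x => ?_⟩
  have hA0 : 0 ≤ A := (abs_nonneg _).trans (hA.abs_S_one_le x)
  have hG0 : 0 ≤ G := hg.nonneg x
  have h_int : IntegrableOn (fun t => s * t ^ β / (s + t) ^ 2) (Ioi 0) :=
    integrableOn_mul_rpow_div_add_sq hβ hs.1
  calc |∫ t in Ioc (0 : ℝ) 1, H.Q m s (H.paraInner b g f t) x / t|
      ≤ ∫ t in Ioc (0 : ℝ) 1, C * A * G * (s * t ^ β / (s + t) ^ 2) :=
        norm_integral_le_of_norm_le ((h_int.mono_set Ioc_subset_Ioi_self).const_mul _)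
          (h_le f g A B G hf hA hg s hs hm x)
    _ = C * A * G * ∫ t in Ioc (0 : ℝ) 1, s * t ^ β / (s + t) ^ 2 := integral_const_mul _ _
    _ ≤ C * A * G * ∫ t in Ioi (0 : ℝ), s * t ^ β / (s + t) ^ 2 := by
        refine mul_le_mul_of_nonneg_left (setIntegral_mono_set h_int ?_
          Ioc_subset_Ioi_self.eventuallyLE) (by positivity)
        filter_upwards [ae_restrict_mem measurableSet_Ioi] with t (ht : 0 < t)
        have := hs.1
        positivity
    _ = C * K * A * G * s ^ β := by
        rw [integral_mul_rpow_div_add_sq β hs.1]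
        ring

lemma exists_abs_paraQ_le (hb : 2 ≤ b) (hβ : β ∈ Ioo (-1 : ℝ) 1) (m : ℕ) :
    ∃ C ≥ 0, ∀ (f g : M → ℝ) (A B G : ℝ), BoundedMeasurable f B → H.HolderBound (b - 1) β A f →
      BoundedMeasurable g G → ∀ s ∈ Ioc (0 : ℝ) 1, (1 ≤ m ∨ s = 1) →
        ∀ x, |H.paraQ b m g f s x| ≤ C * A * G * s ^ β := by
  obtain ⟨C, hC, h_le⟩ := H.exists_abs_integral_Q_paraInner_div_le hb hβ m
  refine ⟨|(gammaInt b)⁻¹| * C, by positivity, fun f g A B G hf hA hg s hs hm x => ?_⟩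
  rw [paraQ, abs_mul, mul_assoc, mul_assoc, mul_assoc, ← mul_assoc A, ← mul_assoc C, ← mul_assoc C]
  exact mul_le_mul_of_nonneg_left (h_le f g A B G hf hA hg s hs hm x) (abs_nonneg _)

lemma paraQ_eq_zero_of_supNorm_eq_zero (hb : 2 ≤ b) {f g : M → ℝ} {B : ℝ}
    (hf : BoundedMeasurable f B) (hg : Measurable g) (hg0 : supNorm g = 0) {m : ℕ} {s : ℝ}
    (hs : s ∈ Ioc (0 : ℝ) 1) (hm : 1 ≤ m ∨ s = 1) (x : M) : H.paraQ b m g f s x = 0 := by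
  obtain ⟨A, hA⟩ := H.exists_holderBound_zero (b - 1) hf
  obtain ⟨C, -, h_le⟩ := H.exists_abs_paraQ_le hb (β := 0) ⟨by norm_num, by norm_num⟩ m
  have hg' : BoundedMeasurable g 0 :=
    ⟨hg, by simpa [hg0] using abs_le_toReal_supNorm (hg0.trans_lt ENNReal.zero_lt_top)⟩
  simpa using h_le f g A B 0 hf hA hg' s hs hm x

lemma exists_supNorm_paraQ_le (hb : 2 ≤ b) (hα : α ∈ Ioo (-2 : ℝ) 2) (m : ℕ) :
    ∃ C > 0, ∀ f g : M → ℝ, Measurable f → supNorm f < ⊤ → Measurable g → supNorm g < ⊤ →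
      ∀ s ∈ Ioc (0 : ℝ) 1, (1 ≤ m ∨ s = 1) →
        ENNReal.ofReal (s ^ (-α / 2)) * supNorm (H.paraQ b m g f s)
          ≤ ENNReal.ofReal C * supNorm g * H.CNorm (b - 1) α f := by
  obtain ⟨C, hC, h_le⟩ := H.exists_abs_paraQ_le (β := α / 2) hb
    ⟨by linarith [hα.1], by linarith [hα.2]⟩ m
  refine ⟨C + 1, by positivity, fun f g hf hf_fin hg hg_fin s hs hm => ?_⟩
  have hf' : BoundedMeasurable f _ := ⟨hf, abs_le_toReal_supNorm hf_fin⟩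
  have hg' : BoundedMeasurable g _ := ⟨hg, abs_le_toReal_supNorm hg_fin⟩
  rcases eq_or_ne (supNorm g) 0 with hg0 | hg0
  · simp [supNorm, H.paraQ_eq_zero_of_supNorm_eq_zero hb hf' hg hg0 hs hm]
  rcases eq_or_ne (H.CNorm (b - 1) α f) ⊤ with hN | hN
  · rw [hN, ENNReal.mul_top (mul_ne_zero (ENNReal.ofReal_pos.2 (by positivity)).ne' hg0)]
    exact le_top
  set N := (H.CNorm (b - 1) α f).toReal
  set G := (supNorm g).toReal
  have h_sup : supNorm (H.paraQ b m g f s) ≤ ENNReal.ofReal (C * N * G * s ^ (α / 2)) :=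
    supNorm_le_ofReal
      (h_le f g _ _ _ hf' (H.holderBound_toReal_CNorm hN.lt_top) hg' s hs hm)
  have h_pow : 0 < s ^ (α / 2) := Real.rpow_pos_of_pos hs.1 _
  calc ENNReal.ofReal (s ^ (-α / 2)) * supNorm (H.paraQ b m g f s)
      ≤ ENNReal.ofReal (s ^ (-α / 2)) * ENNReal.ofReal (C * N * G * s ^ (α / 2)) := by gcongr
    _ = ENNReal.ofReal (C * G * N) := by
        rw [← ENNReal.ofReal_mul (Real.rpow_nonneg hs.1.le _), neg_div, Real.rpow_neg hs.1.le]
        congr 1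
        field_simp
    _ ≤ ENNReal.ofReal ((C + 1) * G * N) := by gcongr; linarith
    _ = ENNReal.ofReal (C + 1) * supNorm g * H.CNorm (b - 1) α f := by
        rw [ENNReal.ofReal_mul (by positivity), ENNReal.ofReal_mul (by positivity),
          ENNReal.ofReal_toReal hg_fin.ne, ENNReal.ofReal_toReal hN]

lemma paraS_eq_paraQ (b : ℕ) (g f : M → ℝ) : H.paraS b g f = H.paraQ b 0 g f 1 := by
  ext x
  simp only [paraS, paraQ, Q_zero]

end Paraproduct

end HeatKernelSetup

theorem paraproduct_estimate_bounded_general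
    {M : Type*} [MeasurableSpace M] [MetricSpace M] (H : HeatKernelSetup M)
    (b : ℕ) (hb : 2 ≤ b) (α : ℝ) (hα : α ∈ Ioo (-2 : ℝ) 2) :
    ∃ C, 0 < C ∧ ∀ f g : M → ℝ, Measurable f → supNorm f < ⊤ → Measurable g → supNorm g < ⊤ →
      (∀ s ∈ Ioc (0 : ℝ) 1, ∀ x : M,
        IntegrableOn (fun t => H.Q (b - 1) s (H.paraInner b g f t) x / t) (Ioc 0 1)) ∧
      (∀ x : M, IntegrableOn (fun t => H.S 1 (H.paraInner b g f t) x / t) (Ioc 0 1)) ∧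
      supNorm (H.paraS b g f) +
          (⨆ s ∈ Ioc (0 : ℝ) 1,
            ENNReal.ofReal (s ^ (-α / 2)) * supNorm (H.paraQ b (b - 1) g f s))
        ≤ ENNReal.ofReal C * supNorm g * H.CNorm (b - 1) α f := by
  obtain ⟨C₀, hC₀, h_low⟩ := H.exists_supNorm_paraQ_le hb hα 0
  obtain ⟨C₁, hC₁, h_high⟩ := H.exists_supNorm_paraQ_le hb hα (b - 1)
  have hb' : 1 ≤ b - 1 := Nat.le_sub_one_of_lt hb
  have h_one : (1 : ℝ) ∈ Ioc (0 : ℝ) 1 := ⟨one_pos, le_rfl⟩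
  refine ⟨C₀ + C₁, by positivity, fun f g hf hf_fin hg hg_fin =>
    ⟨fun s hs x => ?_, fun x => ?_, ?_⟩⟩
  · exact H.integrableOn_Q_paraInner_div hb ⟨hf, abs_le_toReal_supNorm hf_fin⟩
      ⟨hg, abs_le_toReal_supNorm hg_fin⟩ hs (.inl hb') x
  · simp only [← H.Q_zero]
    exact H.integrableOn_Q_paraInner_div hb ⟨hf, abs_le_toReal_supNorm hf_fin⟩
      ⟨hg, abs_le_toReal_supNorm hg_fin⟩ h_one (.inr rfl) x
  · rw [ENNReal.ofReal_add hC₀.le hC₁.le, add_mul, add_mul]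
    refine add_le_add ?_ (iSup₂_le fun s hs => h_high f g hf hf_fin hg hg_fin s hs (.inl hb'))
    simpa [H.paraS_eq_paraQ] using h_low f g hf hf_fin hg hg_fin 1 h_one (.inr rfl)

/-- **Proposition 3.2, first estimate.** For `b ≥ 2` and `α ∈ (-2,1)`, the
paraproduct `Π_g^{(b)}(f)` (whose frequency pieces `Q_s^{(b-1)} Π_g^{(b)}(f)` and
`e^{-L} Π_g^{(b)}(f)` are defined by applying the operators under the time integral, each
`dt/t`-integral converging absolutely) satisfies `‖Π_g^{(b)}(f)‖_{C^α} ≤ C ‖g‖_∞ ‖f‖_{C^α}`. -/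
theorem paraproduct_estimate_bounded
    {M : Type*} [MeasurableSpace M] [MetricSpace M] (H : HeatKernelSetup M)
    (b : ℕ) (hb : 2 ≤ b) (α : ℝ) (hα : α ∈ Set.Ioo (-2 : ℝ) 1) :
    ∃ C, 0 < C ∧ ∀ f g : M → ℝ,
      Measurable f → supNorm f < ⊤ → H.CNorm (b - 1) α f < ⊤ →
      Measurable g → supNorm g < ⊤ →
      (∀ s ∈ Set.Ioc (0 : ℝ) 1, ∀ x : M,
        IntegrableOn (fun t => H.Q (b - 1) s (H.paraInner b g f t) x / t) (Set.Ioc 0 1)) ∧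
      (∀ x : M,
        IntegrableOn (fun t => H.S 1 (H.paraInner b g f t) x / t) (Set.Ioc 0 1)) ∧
      supNorm (H.paraS b g f) +
          (⨆ s ∈ Set.Ioc (0 : ℝ) 1,
            ENNReal.ofReal (s ^ (-α / 2)) * supNorm (H.paraQ b (b - 1) g f s))
        ≤ ENNReal.ofReal C * supNorm g * H.CNorm (b - 1) α f := by
  obtain ⟨C, hC, h⟩ :=
    paraproduct_estimate_bounded_general H b hb α ⟨hα.1, hα.2.trans one_lt_two⟩
  exact ⟨C, hC, fun f g hf hf_fin _ => h f g hf hf_fin⟩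
end
end

section
/- Let d ≥ 2 be a real number and b ≥ 2 + d/2 an integer. For r ∈ (0,1] and s > 0 define A(r,s) := ∫_0^1 ∫_0^1 (r/(r+t₁))^b·(r/(r+t₂))^b·( t₁t₂ / ((t₁+s)(t₂+s)) )^{1/2}·(s+t₁+t₂)^{−d/2}·(r+t₁+t₂)^{−d/2} dt₁/t₁ dt₂/t₂. Then there is a constant C, depending only on d and b, such that for all r ∈ (0,1] and s > 0: A(r,s) ≤ C·( r/(s+r) )·(rs)^{−d/2}·( 1 + log( (s+r)/s ) ). (Lemma A.4, the key integral estimate in the renormalization of the parabolic Anderson model.) -/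
open MeasureTheory Set
open scoped ENNReal

noncomputable section

/-!
Put `c = r s / (r + s)` and `g t = c / (c + t) / √t`. From `(s + t₁ + t₂) ^ (-d / 2)` extract a
factor `s / (s + t₁ + t₂) ≤ s / √((s + t₁) (s + t₂))`; bound what is left of it by `s ^ (-d / 2)`,
and `(r + t₁ + t₂) ^ (-d / 2)` by `r ^ (-d / 2)`. The square root in the integrand then turns into
full factors `s / (s + tᵢ)`, and `r / (r + tᵢ) * (s / (s + tᵢ)) ≤ c / (c + tᵢ)`. Hence the integrand
of `A(r, s)` is at most `(r s) ^ (-d / 2) / s * g t₁ * g t₂`. Since `∫₀^∞ g = π √c` and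
`c / s = r / (r + s)`, the double integral is at most `π² (r / (s + r)) (r s) ^ (-d / 2)`, without
any logarithm.
-/

section ArctanIntegral

open Filter Topology

variable {c : ℝ}

/-- The derivative of `2 √c arctan √(t / c)` in `t`: the one-variable density against which the
kernel of `A(r, s)` is compared. -/
def arctanDensity (c t : ℝ) : ℝ := c / (c + t) / √t

lemma arctanDensity_nonneg {t : ℝ} (hc : 0 ≤ c) (ht : 0 ≤ t) : 0 ≤ arctanDensity c t := by
  unfold arctanDensity
  positivity

lemma hasDerivAt_arctan_sqrt_div_sqrt {t : ℝ} (hc : 0 < c) (ht : 0 < t) :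
    HasDerivAt (fun u ↦ 2 * √c * Real.arctan (√u / √c)) (arctanDensity c t) t := by
  refine ((((Real.hasDerivAt_sqrt ht.ne').div_const √c).arctan).const_mul (2 * √c)).congr_deriv ?_
  rw [arctanDensity, div_pow, Real.sq_sqrt ht.le, Real.sq_sqrt hc.le]
  field_simp

lemma continuous_arctan_sqrt_div_sqrt (c : ℝ) :
    Continuous fun u ↦ 2 * √c * Real.arctan (√u / √c) := by
  fun_prop

lemma tendsto_arctan_sqrt_div_sqrt_atTop (hc : 0 < c) :
    Tendsto (fun u ↦ 2 * √c * Real.arctan (√u / √c)) atTop (𝓝 (Real.pi * √c)) := by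
  have harctan : Tendsto (fun u ↦ Real.arctan (√u / √c)) atTop (𝓝 (Real.pi / 2)) :=
    (Real.tendsto_arctan_atTop.mono_right nhdsWithin_le_nhds).comp
      (Real.tendsto_sqrt_atTop.atTop_div_const (Real.sqrt_pos.2 hc))
  convert harctan.const_mul (2 * √c) using 2
  ring

lemma integrableOn_arctanDensity (hc : 0 < c) :
    IntegrableOn (arctanDensity c) (Ioi 0) :=
  integrableOn_Ioi_deriv_of_nonneg (continuous_arctan_sqrt_div_sqrt c).continuousWithinAt
    (fun _ ht ↦ hasDerivAt_arctan_sqrt_div_sqrt hc ht)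
    (fun _ ht ↦ arctanDensity_nonneg hc.le (mem_Ioi.1 ht).le)
    (tendsto_arctan_sqrt_div_sqrt_atTop hc)

lemma integral_arctanDensity (hc : 0 < c) :
    ∫ t in Ioi 0, arctanDensity c t = Real.pi * √c := by
  rw [integral_Ioi_of_hasDerivAt_of_nonneg (continuous_arctan_sqrt_div_sqrt c).continuousWithinAt
    (fun _ ht ↦ hasDerivAt_arctan_sqrt_div_sqrt hc ht)
    (fun _ ht ↦ arctanDensity_nonneg hc.le (mem_Ioi.1 ht).le)
    (tendsto_arctan_sqrt_div_sqrt_atTop hc)]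
  simp

lemma integrableOn_arctanDensity_mul (hc : 0 < c) :
    IntegrableOn (fun p : ℝ × ℝ ↦ arctanDensity c p.1 * arctanDensity c p.2)
      (Ioi 0 ×ˢ Ioi 0) := by
  rw [IntegrableOn, Measure.volume_eq_prod, ← Measure.prod_restrict]
  exact (integrableOn_arctanDensity hc).mul_prod (integrableOn_arctanDensity hc)

lemma integral_arctanDensity_mul (hc : 0 < c) :
    ∫ p in Ioi (0 : ℝ) ×ˢ Ioi (0 : ℝ), arctanDensity c p.1 * arctanDensity c p.2 =
      Real.pi ^ 2 * c := by
  rw [Measure.volume_eq_prod, setIntegral_prod_mul, integral_arctanDensity hc, ← pow_two, mul_pow,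
    Real.sq_sqrt hc.le]

end ArctanIntegral

section PointwiseBounds

variable {r s x y : ℝ}

lemma div_add_mul_div_add_le (hr : 0 < r) (hs : 0 < s) (hx : 0 ≤ x) :
    r / (r + x) * (s / (s + x)) ≤ r * s / (r + s) / (r * s / (r + s) + x) := by
  have hparallel : r * s / (r + s) / (r * s / (r + s) + x) = r * s / (r * s + x * (r + s)) := by
    field_simp
  rw [hparallel, div_mul_div_comm]
  gcongr
  nlinarith [sq_nonneg x]

lemma div_add_pow_mul_div_add_le (hr : 0 < r) (hs : 0 < s) (hx : 0 ≤ x) {b : ℕ} (hb : b ≠ 0) :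
    (r / (r + x)) ^ b * (s / (s + x)) ≤ r * s / (r + s) / (r * s / (r + s) + x) := by
  have hpow : (r / (r + x)) ^ b ≤ r / (r + x) :=
    pow_le_of_le_one (by positivity) (div_le_one_of_le₀ (by linarith) (by positivity)) hb
  exact (mul_le_mul_of_nonneg_right hpow (by positivity)).trans (div_add_mul_div_add_le hr hs hx)

lemma add_rpow_neg_le {a : ℝ} (ha : 1 ≤ a) (hs : 0 < s) (hx : 0 ≤ x) :
    (s + x) ^ (-a) ≤ s ^ (-a) * (s / (s + x)) := by
  calc (s + x) ^ (-a) = s ^ (-a) * (s / (s + x)) ^ a := by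
        rw [Real.div_rpow hs.le (by positivity), Real.rpow_neg hs.le, Real.rpow_neg (by positivity)]
        field_simp
    _ ≤ s ^ (-a) * (s / (s + x)) ^ (1 : ℝ) := by
        gcongr ?_ * ?_
        exact Real.rpow_le_rpow_of_exponent_ge (by positivity)
          (div_le_one_of_le₀ (by linarith) (by positivity)) ha
    _ = s ^ (-a) * (s / (s + x)) := by rw [Real.rpow_one]

lemma sqrt_div_mul_div_add_le (hs : 0 < s) (hx : 0 ≤ x) (hy : 0 ≤ y) :
    √(x * y / ((x + s) * (y + s))) * (s / (s + x + y)) ≤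
      √x * √y / s * (s / (s + x) * (s / (s + y))) := by
  have hsqrt : √((s + x) * (s + y)) ≤ s + x + y :=
    Real.sqrt_le_iff.2 ⟨by positivity, by nlinarith [mul_nonneg hx hy, sq_nonneg x, sq_nonneg y]⟩
  calc √(x * y / ((x + s) * (y + s))) * (s / (s + x + y))
      ≤ √(x * y / ((s + x) * (s + y))) * (s / √((s + x) * (s + y))) := by
        rw [add_comm x s, add_comm y s]
        gcongr
    _ = √x * √y * s / ((s + x) * (s + y)) := by
        rw [Real.sqrt_div (by positivity), Real.sqrt_mul hx, div_mul_div_comm,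
          Real.mul_self_sqrt (by positivity)]
    _ = √x * √y / s * (s / (s + x) * (s / (s + y))) := by field_simp

end PointwiseBounds

/-- The integrand of `A(r, s)` against the scale-invariant measure `dt₁/t₁ dt₂/t₂`. -/
def resonantKernel (d : ℝ) (b : ℕ) (r s t₁ t₂ : ℝ) : ℝ :=
  (r / (r + t₁)) ^ b * (r / (r + t₂)) ^ b * √(t₁ * t₂ / ((t₁ + s) * (t₂ + s))) *
    (s + t₁ + t₂) ^ (-(d / 2)) * (r + t₁ + t₂) ^ (-(d / 2))

namespace resonantKernel

variable {d r s x y : ℝ} {b : ℕ}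

lemma div_div_nonneg (hr : 0 < r) (hs : 0 < s) (hx : 0 ≤ x) (hy : 0 ≤ y) :
    0 ≤ resonantKernel d b r s x y / y / x := by
  unfold resonantKernel
  positivity

lemma le_mul_sqrt (hd : 2 ≤ d) (hb : b ≠ 0) (hr : 0 < r) (hs : 0 < s) (hx : 0 ≤ x) (hy : 0 ≤ y) :
    resonantKernel d b r s x y ≤ (r * s) ^ (-(d / 2)) / s *
      (r * s / (r + s) / (r * s / (r + s) + x) * √x *
        (r * s / (r + s) / (r * s / (r + s) + y) * √y)) := by
  have hs_pow : (s + x + y) ^ (-(d / 2)) ≤ s ^ (-(d / 2)) * (s / (s + x + y)) := by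
    simpa only [add_assoc] using
      add_rpow_neg_le (by linarith : 1 ≤ d / 2) hs (add_nonneg hx hy)
  have hr_pow : (r + x + y) ^ (-(d / 2)) ≤ r ^ (-(d / 2)) :=
    Real.rpow_le_rpow_of_nonpos hr (by linarith) (by linarith)
  calc resonantKernel d b r s x y
      ≤ (r / (r + x)) ^ b * (r / (r + y)) ^ b * √(x * y / ((x + s) * (y + s))) *
          (s ^ (-(d / 2)) * (s / (s + x + y))) * r ^ (-(d / 2)) := by
        unfold resonantKernel
        gcongr
    _ = (r * s) ^ (-(d / 2)) * ((r / (r + x)) ^ b * (r / (r + y)) ^ b) *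
          (√(x * y / ((x + s) * (y + s))) * (s / (s + x + y))) := by
        rw [Real.mul_rpow hr.le hs.le]
        ring
    _ ≤ (r * s) ^ (-(d / 2)) * ((r / (r + x)) ^ b * (r / (r + y)) ^ b) *
          (√x * √y / s * (s / (s + x) * (s / (s + y)))) := by
        gcongr _ * ?_
        exact sqrt_div_mul_div_add_le hs hx hy
    _ = (r * s) ^ (-(d / 2)) / s * ((r / (r + x)) ^ b * (s / (s + x)) * √x *
          ((r / (r + y)) ^ b * (s / (s + y)) * √y)) := by ring
    _ ≤ _ := by
        gcongr _ * (?_ * _ * (?_ * _))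
        · exact div_add_pow_mul_div_add_le hr hs hx hb
        · exact div_add_pow_mul_div_add_le hr hs hy hb

lemma div_div_le (hd : 2 ≤ d) (hb : b ≠ 0) (hr : 0 < r) (hs : 0 < s) (hx : 0 ≤ x) (hy : 0 ≤ y) :
    resonantKernel d b r s x y / y / x ≤ (r * s) ^ (-(d / 2)) / s *
      (arctanDensity (r * s / (r + s)) x * arctanDensity (r * s / (r + s)) y) := by
  calc resonantKernel d b r s x y / y / x
      ≤ (r * s) ^ (-(d / 2)) / s *
          (r * s / (r + s) / (r * s / (r + s) + x) * √x *
            (r * s / (r + s) / (r * s / (r + s) + y) * √y)) / y / x := by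
        gcongr
        exact le_mul_sqrt hd hb hr hs hx hy
    _ = (r * s) ^ (-(d / 2)) / s *
          (r * s / (r + s) / (r * s / (r + s) + x) * (√x / x) *
            (r * s / (r + s) / (r * s / (r + s) + y) * (√y / y))) := by ring
    _ = _ := by simp only [arctanDensity, Real.sqrt_div_self, ← div_eq_mul_inv]

lemma integrableOn_div_div (hd : 2 ≤ d) (hb : b ≠ 0) (hr : 0 < r) (hs : 0 < s) :
    IntegrableOn (fun p : ℝ × ℝ ↦ resonantKernel d b r s p.1 p.2 / p.2 / p.1)
      (Ioi 0 ×ˢ Ioi 0) := by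
  have hmeas : Measurable fun p : ℝ × ℝ ↦ resonantKernel d b r s p.1 p.2 / p.2 / p.1 := by
    unfold resonantKernel
    fun_prop
  have hc : 0 < r * s / (r + s) := by positivity
  refine ((integrableOn_arctanDensity_mul hc).const_mul ((r * s) ^ (-(d / 2)) / s)).mono'
    hmeas.aestronglyMeasurable ?_
  filter_upwards [ae_restrict_mem (measurableSet_Ioi.prod measurableSet_Ioi)] with p hp
  rw [Real.norm_of_nonneg (div_div_nonneg hr hs hp.1.le hp.2.le)]
  exact div_div_le hd hb hr hs hp.1.le hp.2.le

lemma integral_div_div_le (hd : 2 ≤ d) (hb : b ≠ 0) (hr : 0 < r) (hs : 0 < s) :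
    ∫ p in Ioi (0 : ℝ) ×ˢ Ioi (0 : ℝ), resonantKernel d b r s p.1 p.2 / p.2 / p.1 ≤
      Real.pi ^ 2 * (r / (s + r)) * (r * s) ^ (-(d / 2)) := by
  have hc : 0 < r * s / (r + s) := by positivity
  calc ∫ p in Ioi (0 : ℝ) ×ˢ Ioi (0 : ℝ), resonantKernel d b r s p.1 p.2 / p.2 / p.1
      ≤ ∫ p in Ioi (0 : ℝ) ×ˢ Ioi (0 : ℝ), (r * s) ^ (-(d / 2)) / s *
          (arctanDensity (r * s / (r + s)) p.1 * arctanDensity (r * s / (r + s)) p.2) :=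
        setIntegral_mono_on (integrableOn_div_div hd hb hr hs)
          ((integrableOn_arctanDensity_mul hc).const_mul _)
          (measurableSet_Ioi.prod measurableSet_Ioi)
          fun p hp ↦ div_div_le hd hb hr hs hp.1.le hp.2.le
    _ = (r * s) ^ (-(d / 2)) / s * (Real.pi ^ 2 * (r * s / (r + s))) := by
        rw [integral_const_mul, integral_arctanDensity_mul hc]
    _ = Real.pi ^ 2 * (r / (s + r)) * (r * s) ^ (-(d / 2)) := by
        rw [add_comm r s]
        field_simp

end resonantKernel

theorem renormalization_integral_estimate_general
    {d : ℝ} (hd : 2 ≤ d) {b : ℕ} (hb : b ≠ 0) {r s : ℝ} (hr : 0 < r) (hs : 0 < s)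
    {S : Set ℝ} (hS : S ⊆ Ioi 0) :
    IntegrableOn (fun p : ℝ × ℝ ↦ resonantKernel d b r s p.1 p.2 / p.2 / p.1) (S ×ˢ S) ∧
      ∫ t₁ in S, (∫ t₂ in S, resonantKernel d b r s t₁ t₂ / t₂) / t₁ ≤
        Real.pi ^ 2 * (r / (s + r)) * (r * s) ^ (-(d / 2)) := by
  have hint := resonantKernel.integrableOn_div_div hd hb hr hs
  have hsub : S ×ˢ S ⊆ Ioi 0 ×ˢ Ioi 0 := prod_mono hS hS
  refine ⟨hint.mono_set hsub, ?_⟩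
  calc ∫ t₁ in S, (∫ t₂ in S, resonantKernel d b r s t₁ t₂ / t₂) / t₁
      = ∫ p in S ×ˢ S, resonantKernel d b r s p.1 p.2 / p.2 / p.1 := by
        rw [Measure.volume_eq_prod, setIntegral_prod _ (hint.mono_set hsub)]
        simp only [integral_div]
    _ ≤ ∫ p in Ioi (0 : ℝ) ×ˢ Ioi (0 : ℝ), resonantKernel d b r s p.1 p.2 / p.2 / p.1 := by
        refine setIntegral_mono_set hint ?_ hsub.eventuallyLE
        filter_upwards [ae_restrict_mem (measurableSet_Ioi.prod measurableSet_Ioi)] with p hp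
        exact resonantKernel.div_div_nonneg hr hs hp.1.le hp.2.le
    _ ≤ Real.pi ^ 2 * (r / (s + r)) * (r * s) ^ (-(d / 2)) :=
        resonantKernel.integral_div_div_le hd hb hr hs

/-- **Lemma A.4.** The key integral estimate of the renormalization step: for
`d ≥ 2` and an integer `b ≥ 2 + d/2`, the double time-integral `A(r,s)` is bounded by
`C (r/(s+r)) (rs)^{-d/2} (1 + log((s+r)/s))`, with `C` depending only on `d` and `b`. -/
theorem renormalization_integral_estimate
    (d : ℝ) (hd : 2 ≤ d) (b : ℕ) (hb : 2 + d / 2 ≤ (b : ℝ)) :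
    ∃ C, 0 < C ∧ ∀ r : ℝ, r ∈ Set.Ioc (0 : ℝ) 1 → ∀ s : ℝ, 0 < s →
      (∫ t₁ in Set.Ioc (0 : ℝ) 1, (∫ t₂ in Set.Ioc (0 : ℝ) 1,
          (r / (r + t₁)) ^ b * (r / (r + t₂)) ^ b *
            Real.sqrt (t₁ * t₂ / ((t₁ + s) * (t₂ + s))) *
            (s + t₁ + t₂) ^ (-(d / 2)) * (r + t₁ + t₂) ^ (-(d / 2)) / t₂) / t₁)
        ≤ C * (r / (s + r)) * (r * s) ^ (-(d / 2)) * (1 + Real.log ((s + r) / s)) := by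
  have hb₀ : b ≠ 0 := by
    have hb_pos : (0 : ℝ) < b := by linarith
    exact (Nat.cast_pos.1 hb_pos).ne'
  refine ⟨Real.pi ^ 2, by positivity, fun r ⟨hr, _⟩ s hs ↦ ?_⟩
  have hlog : 0 ≤ Real.log ((s + r) / s) := Real.log_nonneg ((one_le_div hs).2 (by linarith))
  exact (renormalization_integral_estimate_general hd hb₀ hr hs Ioc_subset_Ioi_self).2.trans
    (le_mul_of_one_le_right (by positivity) (by linarith))
end
end
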